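/- Fix T > 0, t ∈ [0,T), s > 0. With κ, γ, η and the payoff data as defined, let ξ(λ) := ∫_ℝ s^{z_y−1}·γ(λ,z_y)·e^{η(λ,z_y)(T−t)}·p(z_y) dy for λ ∈ [0,1]. Then λ ↦ ξ(λ) is twice continuously differentiable on [0,1], and with m := (μ+½σ²)/σ², s₃ := (∫x³K(dx))/σ³, s₄ := (∫x⁴K(dx))/σ⁴ and D_k the Black–Scholes cash greeks: ξ(0) = D₁(t,s)/s; ξ'(0) = s₃·σ·(1/s)·(a₂D₂(t,s) + σ²(T−t)·Σ_{k=2}^{4} b_k D_k(t,s)) with a₂ = ½, b₂ = 1 − m, b₃ = 1 − ½m, b₄ = 1/6; and ξ''(0) = s₃²·σ²·(1/s)·(c₂D₂(t,s) + σ²(T−t)·Σ_{k=2}^{5} d_k D_k(t,s)) + s₃²·σ⁶·(T−t)²·(1/s)·Σ_{k=2}^{7} e_k D_k(t,s) + s₄·σ²·(1/s)·(Σ_{k=2}^{3} f_k D_k(t,s) + σ²(T−t)·Σ_{k=2}^{5} g_k D_k(t,s)), where c₂ = −1, d₂ = 2/3 + m, d₃ = 17/6 − m, d₄ = 3/2 −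 ½m, d₅ = 1/6, e₂ = 1 − 2m + m², e₃ = 7 − 10m + (7/2)m², e₄ = 55/6 − 9m + 2m², e₅ = 23/6 − (7/3)m + ¼m², e₆ = 7/12 − (1/6)m, e₇ = 1/36, f₂ = 3/2, f₃ = 1/3, g₂ = 7/6 − 3m, g₃ = 25/12 − (5/2)m, g₄ = 5/6 − ⅓m, g₅ = 1/12. -/

import Mathlib

open MeasureTheory Complex Set

/-- Cumulant generating function `κ(λ, z)` of the interpolating family. -/
noncomputable def kappa (μ c : ℝ) (K : Measure ℝ) (lam : ℝ) (z : ℂ) : ℂ :=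
  if lam = 0 then (μ : ℂ) * z + (((c + ∫ x : ℝ, x ^ 2 ∂K) : ℝ) : ℂ) / 2 * z ^ 2
  else (μ : ℂ) * z + (c : ℂ) / 2 * z ^ 2 +
    ((lam : ℂ) ^ 2)⁻¹ *
      ∫ x : ℝ, (Complex.exp ((lam : ℂ) * z * (x : ℂ)) - 1 - (lam : ℂ) * z * (x : ℂ)) ∂K

noncomputable def kbar (μ c : ℝ) (K : Measure ℝ) (lam : ℝ) (y z : ℂ) : ℂ :=
  kappa μ c K lam (y + z) - kappa μ c K lam y - kappa μ c K lam z

noncomputable def gamLK (μ c : ℝ) (K : Measure ℝ) (lam : ℝ) (z : ℂ) : ℂ :=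
  kbar μ c K lam z 1 / kbar μ c K lam 1 1

noncomputable def etaLK (μ c : ℝ) (K : Measure ℝ) (lam : ℝ) (z : ℂ) : ℂ :=
  kappa μ c K lam z - kappa μ c K lam 1 * gamLK μ c K lam z

noncomputable def cpowR (s : ℝ) (z : ℂ) : ℂ := Complex.exp (z * Real.log s)

noncomputable def zLine (R y : ℝ) : ℂ := (R : ℂ) + (y : ℂ) * Complex.I

/-- Fourier transform `l̂(y) = ∫ l(x) e^{-ixy} dx`. -/
noncomputable def lhat (l : ℝ → ℝ) (y : ℝ) : ℂ :=
  ∫ x : ℝ, (l x : ℂ) * Complex.exp (-(Complex.I * (x : ℂ) * (y : ℂ)))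

noncomputable def pCoef (l : ℝ → ℝ) (y : ℝ) : ℂ := lhat l y / (2 * (Real.pi : ℂ))

/-- Black-Scholes cash greek `D_n(t,s)` in integral form (with `C = D_0`). -/
noncomputable def cashGreek (σ2 T R : ℝ) (l : ℝ → ℝ) (n : ℕ) (t s : ℝ) : ℂ :=
  ∫ y : ℝ, (∏ k ∈ Finset.range n, (zLine R y - (k : ℂ))) * cpowR s (zLine R y) *
    Complex.exp (((σ2 : ℂ) / 2) * zLine R y * (zLine R y - 1) * ((T : ℂ) - (t : ℂ))) * pCoef l y

/-!
By Taylor's formula `κ(λ, z) = μ z + c z² / 2 + z² G(λ z)`, where `G` is the moment generating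
function of `θ x` under the finite measure `x² K(dx) (1 - θ) dθ`; this also covers `λ = 0`. So `κ`,
and with it `γ` and `η`, can be differentiated in `λ`, and on a vertical line all derivatives grow
at most polynomially, locally uniformly in `λ`. Since `Re (η(λ, R + iy))` is bounded above, the
Fourier integral may be differentiated twice under the integral sign against the rapidly decreasing
`p`. At `λ = 0` the derivatives of the integrand are polynomials in `z` times the Black-Scholes
weight; writing them in falling factorials gives the cash greeks.
-/

open Filter Polynomial ProbabilityTheory
open scoped Topology ContDiff FourierTransform

/-! ### Rapidly decreasing weights -/

/-- Rapidly decreasing continuous weights on the line: every moment of `‖p‖` is finite. These are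
the weights against which families of polynomial growth can be integrated. -/
def RapidDecay (p : ℝ → ℂ) : Prop :=
  Continuous p ∧ ∀ k : ℕ, Integrable fun y : ℝ => |y| ^ k * ‖p y‖

namespace RapidDecay

variable {p : ℝ → ℂ}

lemma integrable_one_add_abs_pow_mul (hp : RapidDecay p) (N : ℕ) :
    Integrable fun y : ℝ => (1 + |y|) ^ N * ‖p y‖ := by
  simp only [add_pow, one_pow, one_mul, Finset.sum_mul]
  refine integrable_finsetSum _ fun k _ => ?_
  simpa only [mul_right_comm _ (_ : ℝ) ‖p _‖] using (hp.2 (N - k)).mul_const _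

lemma mul_of_bounded (hp : RapidDecay p) {g : ℝ → ℂ} (hg : Continuous g) {C : ℝ}
    (hC : ∀ y, ‖g y‖ ≤ C) : RapidDecay fun y => g y * p y := by
  refine ⟨hg.mul hp.1, fun k => ((hp.2 k).const_mul C).mono' ?_ (.of_forall fun y => ?_)⟩
  · exact (((continuous_abs.pow k).mul (hg.mul hp.1).norm)).aestronglyMeasurable
  · rw [norm_mul, norm_norm, norm_pow, Real.norm_eq_abs, abs_abs, norm_mul, mul_left_comm]
    gcongr
    exact hC y

lemma comp_div (hp : RapidDecay p) {a : ℝ} (ha : a ≠ 0) : RapidDecay fun y => p (y / a) := by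
  refine ⟨hp.1.comp (continuous_id.div_const a), fun k => ?_⟩
  refine (((hp.2 k).comp_div ha).const_mul (|a| ^ k)).congr (.of_forall fun y => ?_)
  simp only [abs_div, div_pow, ← mul_assoc]
  rw [mul_div_cancel₀ _ (pow_ne_zero _ (abs_ne_zero.2 ha))]

end RapidDecay

lemma norm_fourier_le_integral_norm (f : ℝ → ℂ) (y : ℝ) : ‖𝓕 f y‖ ≤ ∫ x, ‖f x‖ :=
  VectorFourier.norm_fourierIntegral_le_integral_norm _ _ _ _ _

lemma rapidDecay_fourier {L : ℝ → ℂ} (hL : ContDiff ℝ ∞ L)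
    (hint : ∀ n : ℕ, Integrable (iteratedDeriv n L)) : RapidDecay (𝓕 L) := by
  have hcont : Continuous (𝓕 L) :=
    VectorFourier.fourierIntegral_continuous Real.continuous_fourierChar
      (by exact continuous_inner) (by simpa using hint 0)
  have hbound (n : ℕ) (y : ℝ) : |y| ^ n * ‖𝓕 L y‖ ≤ ∫ x, ‖iteratedDeriv n L x‖ := by
    have hderiv := congrFun (Real.fourier_iteratedDeriv (N := ⊤) hL (fun k _ => hint k)
      (n := n) le_top) y
    calc |y| ^ n * ‖𝓕 L y‖ ≤ ‖(2 * Real.pi * I * y : ℂ) ^ n • 𝓕 L y‖ := by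
          rw [norm_smul, norm_pow]
          gcongr
          simp only [norm_mul, norm_ofNat, norm_real, norm_I, Real.norm_eq_abs,
            abs_of_pos Real.pi_pos]
          nlinarith [Real.pi_gt_three, abs_nonneg y]
      _ ≤ _ := hderiv ▸ norm_fourier_le_integral_norm _ _
  exact ⟨hcont, fun k => integrable_of_le_of_pow_mul_le
    (fun y => by simpa using hbound 0 y) (hbound _) hcont.aestronglyMeasurable⟩

lemma iteratedDeriv_ofReal_comp {l : ℝ → ℝ} (hl : ContDiff ℝ ∞ l) (n : ℕ) :
    iteratedDeriv n (fun x => (l x : ℂ)) = fun x => ((iteratedDeriv n l x : ℝ) : ℂ) := by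
  induction n with
  | zero => simp
  | succ n ih =>
    funext x
    have hdiff := hl.differentiable_iteratedDeriv n (mod_cast WithTop.coe_lt_top n) x
    rw [iteratedDeriv_succ, ih, iteratedDeriv_succ, hdiff.hasDerivAt.ofReal_comp.deriv]

lemma pCoef_eq_fourier (l : ℝ → ℝ) (y : ℝ) :
    pCoef l y = (2 * (Real.pi : ℂ))⁻¹ * 𝓕 (fun x => (l x : ℂ)) (y / (2 * Real.pi)) := by
  rw [pCoef, lhat, Real.fourier_eq', div_eq_inv_mul]
  congr 1
  refine integral_congr_ae (.of_forall fun x => ?_)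
  have hpi : (Real.pi : ℂ) ≠ 0 := mod_cast Real.pi_ne_zero
  simp only [smul_eq_mul, mul_comm (l x : ℂ)]
  congr 2
  push_cast [RCLike.inner_apply, conj_trivial]
  field_simp

lemma rapidDecay_pCoef {l : ℝ → ℝ} (hl : ContDiff ℝ ∞ l)
    (hint : ∀ n : ℕ, Integrable (iteratedDeriv n l)) : RapidDecay (pCoef l) := by
  have hfourier : RapidDecay (𝓕 fun x => (l x : ℂ)) := by
    refine rapidDecay_fourier (Complex.ofRealCLM.contDiff.comp hl) fun n => ?_
    rw [iteratedDeriv_ofReal_comp hl]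
    exact (hint n).ofReal
  rw [funext (pCoef_eq_fourier l)]
  exact (hfourier.comp_div (mul_ne_zero two_ne_zero Real.pi_ne_zero)).mul_of_bounded
    continuous_const fun _ => le_rfl

/-! ### Families of tempered growth -/

/-- A family `u ↦ F u` of functions on the line is tempered at `u₀` if its members are continuous
and of polynomial growth, with the same bound for all parameters `u` near `u₀`. -/
def TemperedAt (F : ℝ → ℝ → ℂ) (u₀ : ℝ) : Prop :=
  ∃ (N : ℕ) (C : ℝ), ∀ᶠ u in 𝓝 u₀, Continuous (F u) ∧ ∀ y, ‖F u y‖ ≤ C * (1 + |y|) ^ N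

namespace TemperedAt

variable {F G : ℝ → ℝ → ℂ} {u₀ : ℝ}

lemma congr (hF : TemperedAt F u₀) (h : ∀ᶠ u in 𝓝 u₀, F u = G u) : TemperedAt G u₀ := by
  obtain ⟨N, C, hC⟩ := hF
  exact ⟨N, C, by filter_upwards [hC, h] with u hu hFG; rwa [← hFG]⟩

lemma exists_nonneg_bound (hF : TemperedAt F u₀) : ∃ (N : ℕ) (C : ℝ), 0 ≤ C ∧
    ∀ᶠ u in 𝓝 u₀, Continuous (F u) ∧ ∀ y, ‖F u y‖ ≤ C * (1 + |y|) ^ N := by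
  obtain ⟨N, C, hC⟩ := hF
  refine ⟨N, C, ?_, hC⟩
  simpa using (norm_nonneg _).trans (hC.self_of_nhds.2 0)

lemma add (hF : TemperedAt F u₀) (hG : TemperedAt G u₀) :
    TemperedAt (fun u y => F u y + G u y) u₀ := by
  obtain ⟨N, C, hC₀, hC⟩ := hF.exists_nonneg_bound
  obtain ⟨M, D, hD₀, hD⟩ := hG.exists_nonneg_bound
  refine ⟨N + M, C + D, ?_⟩
  filter_upwards [hC, hD] with u hFu hGu
  refine ⟨hFu.1.add hGu.1, fun y => (norm_add_le _ _).trans ?_⟩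
  have hy : 1 ≤ 1 + |y| := le_add_of_nonneg_right (abs_nonneg y)
  rw [add_mul]
  gcongr
  · exact (hFu.2 y).trans (by gcongr; exact N.le_add_right M)
  · exact (hGu.2 y).trans (by gcongr; exact M.le_add_left N)

lemma mul (hF : TemperedAt F u₀) (hG : TemperedAt G u₀) :
    TemperedAt (fun u y => F u y * G u y) u₀ := by
  obtain ⟨N, C, hC₀, hC⟩ := hF.exists_nonneg_bound
  obtain ⟨M, D, hD⟩ := hG
  refine ⟨N + M, C * D, ?_⟩
  filter_upwards [hC, hD] with u hFu hGu
  refine ⟨hFu.1.mul hGu.1, fun y => ?_⟩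
  rw [norm_mul, pow_add, mul_mul_mul_comm]
  exact mul_le_mul (hFu.2 y) (hGu.2 y) (norm_nonneg _) (by positivity)

lemma of_continuousAt {g : ℝ → ℂ} (hg : ContinuousAt g u₀) : TemperedAt (fun u _ => g u) u₀ := by
  refine ⟨0, ‖g u₀‖ + 1, ?_⟩
  filter_upwards [hg.norm.eventually_le_const (lt_add_one _)] with u hu
  exact ⟨continuous_const, fun y => by simpa using hu⟩

lemma const (a : ℂ) : TemperedAt (fun _ _ => a) u₀ := of_continuousAt continuousAt_const

lemma pow (hF : TemperedAt F u₀) : ∀ n : ℕ, TemperedAt (fun u y => F u y ^ n) u₀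
  | 0 => by simpa only [pow_zero] using const 1
  | n + 1 => by simpa only [pow_succ] using (hF.pow n).mul hF

lemma zLine (r : ℝ) : TemperedAt (fun _ y => zLine r y) u₀ := by
  refine ⟨1, |r| + 1, .of_forall fun _ => ⟨by unfold _root_.zLine; fun_prop, fun y => ?_⟩⟩
  have htriangle : ‖_root_.zLine r y‖ ≤ |r| + |y| :=
    (norm_add_le _ _).trans_eq (by simp)
  nlinarith [abs_nonneg r, abs_nonneg y]

lemma freeze (hF : TemperedAt F u₀) (y₀ : ℝ) : TemperedAt (fun u _ => F u y₀) u₀ := by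
  obtain ⟨N, C, hC⟩ := hF
  refine ⟨0, C * (1 + |y₀|) ^ N, ?_⟩
  filter_upwards [hC] with u hu
  exact ⟨continuous_const, fun y => by simpa using hu.2 y₀⟩

lemma exp (hcont : ∀ᶠ u in 𝓝 u₀, Continuous (F u)) {C : ℝ}
    (hC : ∀ᶠ u in 𝓝 u₀, ∀ y, (F u y).re ≤ C) : TemperedAt (fun u y => Complex.exp (F u y)) u₀ := by
  refine ⟨0, Real.exp C, ?_⟩
  filter_upwards [hcont, hC] with u hcontu hu
  exact ⟨continuous_exp.comp hcontu, fun y => by simpa [norm_exp] using hu y⟩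

variable {p : ℝ → ℂ}

lemma exists_integrable_bound (hF : TemperedAt F u₀) (hp : RapidDecay p) :
    ∃ B : ℝ → ℝ, Integrable B ∧ ∀ᶠ u in 𝓝 u₀,
      AEStronglyMeasurable (fun y => F u y * p y) volume ∧ ∀ y, ‖F u y * p y‖ ≤ B y := by
  obtain ⟨N, C, hC⟩ := hF
  refine ⟨fun y => C * ((1 + |y|) ^ N * ‖p y‖),
    (hp.integrable_one_add_abs_pow_mul N).const_mul C, ?_⟩
  filter_upwards [hC] with u hu
  refine ⟨(hu.1.mul hp.1).aestronglyMeasurable, fun y => ?_⟩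
  rw [norm_mul, ← mul_assoc]
  gcongr
  exact hu.2 y

lemma integrable_mul (hF : TemperedAt F u₀) (hp : RapidDecay p) :
    Integrable fun y => F u₀ y * p y := by
  obtain ⟨B, hB, hbound⟩ := hF.exists_integrable_bound hp
  have := hbound.self_of_nhds
  exact hB.mono' this.1 (.of_forall this.2)

lemma continuousAt_integral (hF : TemperedAt F u₀) (hp : RapidDecay p)
    (hcont : ∀ y, ContinuousAt (fun u => F u y) u₀) :
    ContinuousAt (fun u => ∫ y, F u y * p y) u₀ := by
  obtain ⟨B, hB, hbound⟩ := hF.exists_integrable_bound hp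
  exact continuousAt_of_dominated (hbound.mono fun u hu => hu.1)
    (hbound.mono fun u hu => .of_forall hu.2) hB
    (.of_forall fun y => (hcont y).mul continuousAt_const)

lemma hasDerivAt_integral (hF : TemperedAt F u₀) (hG : TemperedAt G u₀) (hp : RapidDecay p)
    (hderiv : ∀ᶠ u in 𝓝 u₀, ∀ y, HasDerivAt (fun v => F v y) (G u y) u) :
    HasDerivAt (fun u => ∫ y, F u y * p y) (∫ y, G u₀ y * p y) u₀ := by
  obtain ⟨_, -, hFmeas⟩ := hF.exists_integrable_bound hp
  obtain ⟨B, hB, hbound⟩ := hG.exists_integrable_bound hp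
  have hnhds := inter_mem hbound hderiv
  exact (hasDerivAt_integral_of_dominated_loc_of_deriv_le hnhds (hFmeas.mono fun u hu => hu.1)
    (hF.integrable_mul hp) hbound.self_of_nhds.1 (.of_forall fun y u hu => hu.1.2 y) hB
    (.of_forall fun y u hu => (hu.2 y).mul_const (p y))).2

end TemperedAt

/-- `F₀, F₁, F₂` is a 2-jet in the parameter `u` at `u₀`: near `u₀`, the families `F₁` and `F₂`
are the first two `u`-derivatives of `F₀`, and all three are tempered. -/
structure TemperedJetAt (F₀ F₁ F₂ : ℝ → ℝ → ℂ) (u₀ : ℝ) : Prop where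
  tempered₀ : TemperedAt F₀ u₀
  tempered₁ : TemperedAt F₁ u₀
  tempered₂ : TemperedAt F₂ u₀
  hasDerivAt₀ : ∀ᶠ u in 𝓝 u₀, ∀ y, HasDerivAt (fun v => F₀ v y) (F₁ u y) u
  hasDerivAt₁ : ∀ᶠ u in 𝓝 u₀, ∀ y, HasDerivAt (fun v => F₁ v y) (F₂ u y) u
  continuousAt₂ : ∀ y, ContinuousAt (fun u => F₂ u y) u₀

namespace TemperedJetAt

variable {F₀ F₁ F₂ G₀ G₁ G₂ : ℝ → ℝ → ℂ} {u₀ : ℝ}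

lemma continuousAt₀ (hF : TemperedJetAt F₀ F₁ F₂ u₀) (y : ℝ) :
    ContinuousAt (fun u => F₀ u y) u₀ :=
  (hF.hasDerivAt₀.self_of_nhds y).continuousAt

lemma continuousAt₁ (hF : TemperedJetAt F₀ F₁ F₂ u₀) (y : ℝ) :
    ContinuousAt (fun u => F₁ u y) u₀ :=
  (hF.hasDerivAt₁.self_of_nhds y).continuousAt

lemma congr (hF : TemperedJetAt F₀ F₁ F₂ u₀) (h : ∀ᶠ u in 𝓝 u₀, ∀ y, F₀ u y = G₀ u y) :
    TemperedJetAt G₀ F₁ F₂ u₀ where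
  tempered₀ := hF.tempered₀.congr (h.mono fun _ hu => funext hu)
  tempered₁ := hF.tempered₁
  tempered₂ := hF.tempered₂
  hasDerivAt₀ := by
    filter_upwards [hF.hasDerivAt₀, h.eventually_nhds] with u hderiv hu y
    exact (hderiv y).congr_of_eventuallyEq (hu.mono fun v hv => (hv y).symm)
  hasDerivAt₁ := hF.hasDerivAt₁
  continuousAt₂ := hF.continuousAt₂

lemma const {A : ℝ → ℂ} (hA : TemperedAt (fun _ => A) u₀) :
    TemperedJetAt (fun _ => A) (fun _ _ => 0) (fun _ _ => 0) u₀ where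
  tempered₀ := hA
  tempered₁ := .const 0
  tempered₂ := .const 0
  hasDerivAt₀ := .of_forall fun _ _ => hasDerivAt_const _ _
  hasDerivAt₁ := .of_forall fun _ _ => hasDerivAt_const _ _
  continuousAt₂ _ := continuousAt_const

lemma add (hF : TemperedJetAt F₀ F₁ F₂ u₀) (hG : TemperedJetAt G₀ G₁ G₂ u₀) :
    TemperedJetAt (fun u y => F₀ u y + G₀ u y) (fun u y => F₁ u y + G₁ u y)
      (fun u y => F₂ u y + G₂ u y) u₀ where
  tempered₀ := hF.tempered₀.add hG.tempered₀
  tempered₁ := hF.tempered₁.add hG.tempered₁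
  tempered₂ := hF.tempered₂.add hG.tempered₂
  hasDerivAt₀ := by
    filter_upwards [hF.hasDerivAt₀, hG.hasDerivAt₀] with u h h' y using (h y).add (h' y)
  hasDerivAt₁ := by
    filter_upwards [hF.hasDerivAt₁, hG.hasDerivAt₁] with u h h' y using (h y).add (h' y)
  continuousAt₂ y := (hF.continuousAt₂ y).add (hG.continuousAt₂ y)

lemma mul (hF : TemperedJetAt F₀ F₁ F₂ u₀) (hG : TemperedJetAt G₀ G₁ G₂ u₀) :
    TemperedJetAt (fun u y => F₀ u y * G₀ u y) (fun u y => F₁ u y * G₀ u y + F₀ u y * G₁ u y)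
      (fun u y => F₂ u y * G₀ u y + 2 * (F₁ u y * G₁ u y) + F₀ u y * G₂ u y) u₀ where
  tempered₀ := hF.tempered₀.mul hG.tempered₀
  tempered₁ := (hF.tempered₁.mul hG.tempered₀).add (hF.tempered₀.mul hG.tempered₁)
  tempered₂ := ((hF.tempered₂.mul hG.tempered₀).add
    ((TemperedAt.const 2).mul (hF.tempered₁.mul hG.tempered₁))).add
      (hF.tempered₀.mul hG.tempered₂)
  hasDerivAt₀ := by
    filter_upwards [hF.hasDerivAt₀, hG.hasDerivAt₀] with u h h' y using (h y).mul (h' y)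
  hasDerivAt₁ := by
    filter_upwards [hF.hasDerivAt₀, hG.hasDerivAt₀, hF.hasDerivAt₁, hG.hasDerivAt₁]
      with u hF₀ hG₀ hF₁ hG₁ y
    exact (((hF₁ y).mul (hG₀ y)).add ((hF₀ y).mul (hG₁ y))).congr_deriv (by ring)
  continuousAt₂ y := (((hF.continuousAt₂ y).mul (hG.continuousAt₀ y)).add
    (continuousAt_const.mul ((hF.continuousAt₁ y).mul (hG.continuousAt₁ y)))).add
      ((hF.continuousAt₀ y).mul (hG.continuousAt₂ y))

lemma const_add {A : ℝ → ℂ} (hA : TemperedAt (fun _ => A) u₀) (hF : TemperedJetAt F₀ F₁ F₂ u₀) :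
    TemperedJetAt (fun u y => A y + F₀ u y) F₁ F₂ u₀ := by
  simpa only [zero_add] using (const hA).add hF

lemma const_mul {A : ℝ → ℂ} (hA : TemperedAt (fun _ => A) u₀) (hF : TemperedJetAt F₀ F₁ F₂ u₀) :
    TemperedJetAt (fun u y => A y * F₀ u y) (fun u y => A y * F₁ u y)
      (fun u y => A y * F₂ u y) u₀ := by
  simpa only [zero_mul, mul_zero, zero_add] using (const hA).mul hF

lemma sub (hF : TemperedJetAt F₀ F₁ F₂ u₀) (hG : TemperedJetAt G₀ G₁ G₂ u₀) :
    TemperedJetAt (fun u y => F₀ u y - G₀ u y) (fun u y => F₁ u y - G₁ u y)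
      (fun u y => F₂ u y - G₂ u y) u₀ := by
  simpa only [neg_one_mul, ← sub_eq_add_neg] using hF.add (const_mul (.const (-1)) hG)

lemma freeze (hF : TemperedJetAt F₀ F₁ F₂ u₀) (y₀ : ℝ) :
    TemperedJetAt (fun u _ => F₀ u y₀) (fun u _ => F₁ u y₀) (fun u _ => F₂ u y₀) u₀ where
  tempered₀ := hF.tempered₀.freeze y₀
  tempered₁ := hF.tempered₁.freeze y₀
  tempered₂ := hF.tempered₂.freeze y₀
  hasDerivAt₀ := hF.hasDerivAt₀.mono fun _ h _ => h y₀
  hasDerivAt₁ := hF.hasDerivAt₁.mono fun _ h _ => h y₀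
  continuousAt₂ _ := hF.continuousAt₂ y₀

lemma inv {g₀ g₁ g₂ : ℝ → ℂ}
    (hg : TemperedJetAt (fun u _ => g₀ u) (fun u _ => g₁ u) (fun u _ => g₂ u) u₀)
    (hne : g₀ u₀ ≠ 0) :
    TemperedJetAt (fun u _ => (g₀ u)⁻¹) (fun u _ => -(g₁ u / g₀ u ^ 2))
      (fun u _ => 2 * g₁ u ^ 2 / g₀ u ^ 3 - g₂ u / g₀ u ^ 2) u₀ := by
  have hc₀ := hg.continuousAt₀ 0
  have hc₁ := hg.continuousAt₁ 0
  have hc₂ : ContinuousAt (fun u => 2 * g₁ u ^ 2 / g₀ u ^ 3 - g₂ u / g₀ u ^ 2) u₀ :=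
    (((continuousAt_const.mul (hc₁.pow 2)).div (hc₀.pow 3) (pow_ne_zero 3 hne))).sub
      ((hg.continuousAt₂ 0).div (hc₀.pow 2) (pow_ne_zero 2 hne))
  refine ⟨.of_continuousAt (hc₀.inv₀ hne),
    .of_continuousAt (hc₁.div (hc₀.pow 2) (pow_ne_zero 2 hne)).neg, .of_continuousAt hc₂, ?_, ?_,
    fun _ => hc₂⟩
  · filter_upwards [hg.hasDerivAt₀, hc₀.eventually_ne hne] with u h₀ hu y
    exact ((h₀ y).inv hu).congr_deriv (neg_div _ _)
  · filter_upwards [hg.hasDerivAt₀, hg.hasDerivAt₁, hc₀.eventually_ne hne] with u h₀ h₁ hu y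
    refine ((h₁ y).div ((h₀ y).pow 2) (pow_ne_zero 2 hu)).neg.congr_deriv ?_
    simp only [Pi.pow_apply]
    field_simp
    ring

lemma exp (hF : TemperedJetAt F₀ F₁ F₂ u₀) {C : ℝ}
    (hC : ∀ᶠ u in 𝓝 u₀, ∀ y, (F₀ u y).re ≤ C) :
    TemperedJetAt (fun u y => Complex.exp (F₀ u y)) (fun u y => Complex.exp (F₀ u y) * F₁ u y)
      (fun u y => Complex.exp (F₀ u y) * (F₁ u y ^ 2 + F₂ u y)) u₀ := by
  obtain ⟨_, _, hcont⟩ := hF.tempered₀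
  have hexp : TemperedAt (fun u y => Complex.exp (F₀ u y)) u₀ := .exp (hcont.mono fun _ h => h.1) hC
  refine ⟨hexp, hexp.mul hF.tempered₁, hexp.mul ((hF.tempered₁.pow 2).add hF.tempered₂), ?_, ?_,
    fun y => (hF.continuousAt₀ y).cexp.mul
      (((hF.continuousAt₁ y).pow 2).add (hF.continuousAt₂ y))⟩
  · filter_upwards [hF.hasDerivAt₀] with u h y using (h y).cexp
  · filter_upwards [hF.hasDerivAt₀, hF.hasDerivAt₁] with u h₀ h₁ y
    exact ((h₀ y).cexp.mul (h₁ y)).congr_deriv (by ring)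

end TemperedJetAt

lemma contDiffOn_two_of_hasDerivWithinAt {E : Type*} [NormedAddCommGroup E] [NormedSpace ℝ E]
    {f f₁ f₂ : ℝ → E} {S : Set ℝ} (hS : UniqueDiffOn ℝ S)
    (hf : ∀ x ∈ S, HasDerivWithinAt f (f₁ x) S x) (hf₁ : ∀ x ∈ S, HasDerivWithinAt f₁ (f₂ x) S x)
    (hf₂ : ContinuousOn f₂ S) :
    ContDiffOn ℝ 2 f S ∧ EqOn (iteratedDerivWithin 1 f S) f₁ S ∧
      EqOn (iteratedDerivWithin 2 f S) f₂ S := by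
  have hderiv : EqOn (derivWithin f S) f₁ S := fun x hx => (hf x hx).derivWithin (hS x hx)
  have hderiv₁ : EqOn (derivWithin f₁ S) f₂ S := fun x hx => (hf₁ x hx).derivWithin (hS x hx)
  have hone : EqOn (iteratedDerivWithin 1 f S) f₁ S := by rwa [iteratedDerivWithin_one]
  refine ⟨?_, hone, fun x hx => ?_⟩
  · have hf₁C : ContDiffOn ℝ 1 f₁ S := (contDiffOn_one_iff_derivWithin hS).2
      ⟨fun x hx => (hf₁ x hx).differentiableWithinAt, hf₂.congr hderiv₁⟩
    exact (contDiffOn_succ_iff_derivWithin (n := 1) hS).2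
      ⟨fun x hx => (hf x hx).differentiableWithinAt, by simp, hf₁C.congr hderiv⟩
  · rw [iteratedDerivWithin_succ, derivWithin_congr hone (hone hx), hderiv₁ hx]

lemma TemperedJetAt.contDiffOn_integral {F₀ F₁ F₂ : ℝ → ℝ → ℂ} {p : ℝ → ℂ} {S : Set ℝ}
    (hS : UniqueDiffOn ℝ S) (hF : ∀ u ∈ S, TemperedJetAt F₀ F₁ F₂ u) (hp : RapidDecay p) :
    ContDiffOn ℝ 2 (fun u => ∫ y, F₀ u y * p y) S ∧
      EqOn (iteratedDerivWithin 1 (fun u => ∫ y, F₀ u y * p y) S) (fun u => ∫ y, F₁ u y * p y) S ∧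
      EqOn (iteratedDerivWithin 2 (fun u => ∫ y, F₀ u y * p y) S) (fun u => ∫ y, F₂ u y * p y) S :=
  contDiffOn_two_of_hasDerivWithinAt hS
    (fun u hu => ((hF u hu).tempered₀.hasDerivAt_integral (hF u hu).tempered₁ hp
      (hF u hu).hasDerivAt₀).hasDerivWithinAt)
    (fun u hu => ((hF u hu).tempered₁.hasDerivAt_integral (hF u hu).tempered₂ hp
      (hF u hu).hasDerivAt₁).hasDerivWithinAt)
    (fun u hu => ((hF u hu).tempered₂.continuousAt_integral hp
      (hF u hu).continuousAt₂).continuousWithinAt)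

lemma continuous_zLine (R : ℝ) : Continuous (zLine R) := by
  unfold zLine
  fun_prop

lemma RapidDecay.integrable_eval_zLine_mul {q : ℝ → ℂ} (hq : RapidDecay q) (R : ℝ) (P : ℂ[X]) :
    Integrable fun y => P.eval (zLine R y) * q y := by
  induction P using Polynomial.induction_on' with
  | add P Q hP hQ =>
    simp only [eval_add, add_mul]
    exact hP.add hQ
  | monomial n a =>
    simp only [eval_monomial]
    exact (((TemperedAt.const a).mul ((TemperedAt.zLine R).pow n)).integrable_mul
      (u₀ := 0) hq)

/-- Integration of polynomials in `R + iy` against a rapidly decreasing weight `q`, as a linear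
functional. -/
noncomputable def RapidDecay.polyIntegral {q : ℝ → ℂ} (hq : RapidDecay q) (R : ℝ) :
    ℂ[X] →ₗ[ℂ] ℂ where
  toFun P := ∫ y, P.eval (zLine R y) * q y
  map_add' P Q := by
    simpa only [eval_add, add_mul] using
      integral_add (hq.integrable_eval_zLine_mul R P) (hq.integrable_eval_zLine_mul R Q)
  map_smul' a P := by
    simpa only [eval_smul, smul_eq_mul, mul_assoc, RingHom.id_apply] using integral_const_mul a _

/-! ### Moment generating functions on vertical lines -/

lemma zLine_re (r y : ℝ) : (zLine r y).re = r := by simp [zLine]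

lemma zLine_zero (r : ℝ) : zLine r 0 = r := by simp [zLine]

lemma zLine_add_one (r y : ℝ) : zLine r y + 1 = zLine (r + 1) y := by
  simp only [zLine]
  push_cast
  ring

lemma re_ofReal_mul_zLine (u r y : ℝ) : ((u : ℂ) * zLine r y).re = u * r := by
  rw [re_ofReal_mul, zLine_re]

section ExponentialMoments

variable {Ω : Type*} [MeasurableSpace Ω] {X : Ω → ℝ} {μ : Measure Ω}

lemma hasDerivAt_iteratedDeriv_complexMGF_succ {w : ℂ}
    (hw : w.re ∈ interior (integrableExpSet X μ)) (n : ℕ) :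
    HasDerivAt (iteratedDeriv n (complexMGF X μ)) (iteratedDeriv (n + 1) (complexMGF X μ) w) w :=
  iteratedDeriv_complexMGF hw (n + 1) ▸ hasDerivAt_iteratedDeriv_complexMGF hw n

lemma exists_norm_iteratedDeriv_complexMGF_le {v : ℝ}
    (hv : v ∈ interior (integrableExpSet X μ)) (n : ℕ) :
    ∃ C : ℝ, ∀ᶠ t in 𝓝 v, ∀ w : ℂ, w.re = t → ‖iteratedDeriv n (complexMGF X μ) w‖ ≤ C := by
  obtain ⟨a, b, hab, hnhds, hsub⟩ :=
    exists_Icc_mem_subset_of_mem_nhds (isOpen_interior.mem_nhds hv)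
  have hint {s : ℝ} (hs : s ∈ Icc a b) :=
    integrable_pow_abs_mul_exp_of_mem_interior_integrableExpSet (hsub hs) n
  have hab' := hab.1.trans hab.2
  refine ⟨∫ x, |X x| ^ n * Real.exp (a * X x) + |X x| ^ n * Real.exp (b * X x) ∂μ, ?_⟩
  filter_upwards [hnhds] with t ht w hw
  rw [iteratedDeriv_complexMGF (hw ▸ hsub ht)]
  refine norm_integral_le_of_norm_le
    ((hint (left_mem_Icc.2 hab')).add (hint (right_mem_Icc.2 hab'))) (.of_forall fun x => ?_)
  rw [norm_mul, norm_pow, norm_real, Real.norm_eq_abs, norm_exp, re_mul_ofReal, hw, ← mul_add]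
  gcongr
  rcases le_total 0 (X x) with hX | hX
  · exact (Real.exp_le_exp.2 (mul_le_mul_of_nonneg_right ht.2 hX)).trans
      (le_add_of_nonneg_left (Real.exp_pos _).le)
  · exact (Real.exp_le_exp.2 (mul_le_mul_of_nonpos_right ht.1 hX)).trans
      (le_add_of_nonneg_right (Real.exp_pos _).le)

variable {u₀ r : ℝ}

lemma eventually_re_mul_zLine_mem_interior (h : u₀ * r ∈ interior (integrableExpSet X μ)) :
    ∀ᶠ u : ℝ in 𝓝 u₀, ∀ y, ((u : ℂ) * zLine r y).re ∈ interior (integrableExpSet X μ) := by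
  simp only [re_ofReal_mul_zLine, forall_const]
  exact (continuous_mul_const r).continuousAt.eventually_mem (isOpen_interior.mem_nhds h)

lemma temperedAt_iteratedDeriv_complexMGF (h : u₀ * r ∈ interior (integrableExpSet X μ)) (n : ℕ) :
    TemperedAt (fun u y => iteratedDeriv n (complexMGF X μ) (u * zLine r y)) u₀ := by
  obtain ⟨C, hC⟩ := exists_norm_iteratedDeriv_complexMGF_le h n
  refine ⟨0, C, ?_⟩
  filter_upwards [(continuous_mul_const r).continuousAt.eventually hC,
    eventually_re_mul_zLine_mem_interior h] with u hu hmem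
  refine ⟨continuous_iff_continuousAt.2 fun y => ?_, fun y => ?_⟩
  · exact ContinuousAt.comp' (g := iteratedDeriv n (complexMGF X μ))
      (hasDerivAt_iteratedDeriv_complexMGF_succ (hmem y) n).continuousAt
      (continuousAt_const.mul (continuous_zLine r).continuousAt)
  · simpa using hu _ (re_ofReal_mul_zLine u r y)

lemma hasDerivAt_iteratedDeriv_complexMGF_mul {z : ℂ} {u : ℝ}
    (h : ((u : ℂ) * z).re ∈ interior (integrableExpSet X μ)) (n : ℕ) :
    HasDerivAt (fun v : ℝ => iteratedDeriv n (complexMGF X μ) (v * z))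
      (z * iteratedDeriv (n + 1) (complexMGF X μ) (u * z)) u := by
  have hlin : HasDerivAt (fun v : ℝ => (v : ℂ) * z) z u := by
    simpa using (ofRealCLM.hasDerivAt (x := u)).mul_const z
  exact ((hasDerivAt_iteratedDeriv_complexMGF_succ h n).comp u hlin).congr_deriv (mul_comm _ _)

lemma temperedJetAt_complexMGF (h : u₀ * r ∈ interior (integrableExpSet X μ)) :
    TemperedJetAt (fun u y => complexMGF X μ (u * zLine r y))
      (fun u y => zLine r y * iteratedDeriv 1 (complexMGF X μ) (u * zLine r y))
      (fun u y => zLine r y ^ 2 * iteratedDeriv 2 (complexMGF X μ) (u * zLine r y)) u₀ where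
  tempered₀ := by simpa only [iteratedDeriv_zero] using temperedAt_iteratedDeriv_complexMGF h 0
  tempered₁ := (TemperedAt.zLine r).mul (temperedAt_iteratedDeriv_complexMGF h 1)
  tempered₂ := ((TemperedAt.zLine r).pow 2).mul (temperedAt_iteratedDeriv_complexMGF h 2)
  hasDerivAt₀ := (eventually_re_mul_zLine_mem_interior h).mono fun u hu y => by
    simpa only [iteratedDeriv_zero] using hasDerivAt_iteratedDeriv_complexMGF_mul (hu y) 0
  hasDerivAt₁ := (eventually_re_mul_zLine_mem_interior h).mono fun u hu y =>
    ((hasDerivAt_iteratedDeriv_complexMGF_mul (hu y) 1).const_mul _).congr_deriv (by ring)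
  continuousAt₂ y := continuousAt_const.mul (hasDerivAt_iteratedDeriv_complexMGF_mul
    ((eventually_re_mul_zLine_mem_interior h).self_of_nhds y) 2).continuousAt

end ExponentialMoments

/-! ### The compensated exponential integral -/

/-- The measure `x² K(dx)`, finite at the origin when `K` is a Lévy measure. -/
noncomputable def sqMeasure (K : Measure ℝ) : Measure ℝ :=
  K.withDensity fun x => ENNReal.ofReal (x ^ 2)

/-- The open interval of exponents `s` around which `x² exp (s x)` is `K`-integrable. -/
def expDomain (K : Measure ℝ) : Set ℝ := interior (integrableExpSet id (sqMeasure K))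

/-- The measure `(1 - θ) dθ` on `(0, 1]`, the weight in Taylor's formula of order two. -/
noncomputable def taylorWeight : Measure ℝ :=
  (volume.restrict (Ioc 0 1)).withDensity fun θ => ENNReal.ofReal (1 - θ)

/-- The moment generating function of `θ x` under `x² K(dx) (1 - θ) dθ`. By Taylor's formula,
`w ^ 2 * levyMGF K w` is the compensated exponential integral `∫ (exp (w x) - 1 - w x) K(dx)`. -/
noncomputable def levyMGF (K : Measure ℝ) : ℂ → ℂ :=
  complexMGF (fun q : ℝ × ℝ => q.2 * q.1) ((sqMeasure K).prod taylorWeight)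

section SqMeasure

variable {E : Type*} [NormedAddCommGroup E] [NormedSpace ℝ E] {K : Measure ℝ}

lemma integral_sqMeasure (g : ℝ → E) : ∫ x, g x ∂sqMeasure K = ∫ x, x ^ 2 • g x ∂K := by
  rw [sqMeasure, integral_withDensity_eq_integral_toReal_smul (by fun_prop) (by simp)]
  simp only [ENNReal.toReal_ofReal (sq_nonneg _)]

lemma integrable_sqMeasure_iff {g : ℝ → E} :
    Integrable g (sqMeasure K) ↔ Integrable (fun x => x ^ 2 • g x) K := by
  rw [sqMeasure, integrable_withDensity_iff_integrable_smul' (by fun_prop) (by simp)]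
  simp only [ENNReal.toReal_ofReal (sq_nonneg _)]

end SqMeasure

section TaylorWeight

lemma ae_taylorWeight_mem_Ioc : ∀ᵐ θ ∂taylorWeight, θ ∈ Ioc (0 : ℝ) 1 :=
  (withDensity_absolutelyContinuous _ _).ae_le (ae_restrict_mem measurableSet_Ioc)

instance : IsFiniteMeasure taylorWeight :=
  isFiniteMeasure_withDensity_ofReal
    ((by fun_prop : Continuous fun θ : ℝ => 1 - θ).integrableOn_Ioc).hasFiniteIntegral

lemma integral_taylorWeight {E : Type*} [NormedAddCommGroup E] [NormedSpace ℝ E] (g : ℝ → E) :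
    ∫ θ, g θ ∂taylorWeight = ∫ θ in (0 : ℝ)..1, (1 - θ) • g θ := by
  rw [taylorWeight, integral_withDensity_eq_integral_toReal_smul (by fun_prop) (by simp),
    intervalIntegral.integral_of_le zero_le_one]
  refine setIntegral_congr_fun measurableSet_Ioc fun θ hθ => ?_
  simp only [ENNReal.toReal_ofReal (sub_nonneg.2 hθ.2)]

lemma integral_pow_taylorWeight (j : ℕ) :
    ∫ θ, (θ : ℂ) ^ j ∂taylorWeight = 1 / ((j + 1) * (j + 2)) := by
  have hsplit (θ : ℝ) : (1 - θ) • (θ : ℂ) ^ j = ((θ ^ j - θ ^ (j + 1) : ℝ) : ℂ) := by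
    rw [real_smul]
    push_cast
    ring
  rw [integral_taylorWeight]
  simp only [hsplit]
  rw [intervalIntegral.integral_ofReal, intervalIntegral.integral_sub
    (intervalIntegral.intervalIntegrable_pow _) (intervalIntegral.intervalIntegrable_pow _),
    integral_pow, integral_pow]
  have hj₁ : (j + 1 : ℂ) ≠ 0 := mod_cast j.succ_ne_zero
  have hj₂ : (j + 2 : ℂ) ≠ 0 := mod_cast (j + 1).succ_ne_zero
  have hj₃ : (j + 1 + 1 : ℂ) ≠ 0 := mod_cast (j + 1).succ_ne_zero
  push_cast
  simp only [one_pow, ne_eq, Nat.add_eq_zero_iff, one_ne_zero, and_false, not_false_eq_true,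
    zero_pow, sub_zero]
  field_simp
  ring

lemma sq_mul_integral_exp_taylorWeight (v : ℂ) :
    v ^ 2 * ∫ θ, exp (v * θ) ∂taylorWeight = exp v - 1 - v := by
  have hderiv (θ : ℝ) : HasDerivAt (fun θ : ℝ => (1 - θ) * v * exp (v * θ) + exp (v * θ))
      (v ^ 2 * ((1 - θ) • exp (v * θ))) θ := by
    have hid : HasDerivAt (fun θ : ℝ => (θ : ℂ)) 1 θ := ofRealCLM.hasDerivAt
    have hexp := (hid.const_mul v).cexp
    refine ((((hid.const_sub 1).mul_const v).mul hexp).add hexp).congr_deriv ?_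
    rw [real_smul]
    push_cast
    ring
  rw [integral_taylorWeight, ← intervalIntegral.integral_const_mul,
    intervalIntegral.integral_eq_sub_of_hasDerivAt (fun θ _ => hderiv θ)
      (Continuous.intervalIntegrable (by fun_prop) _ _)]
  simp only [ofReal_one, ofReal_zero, mul_zero, mul_one, exp_zero]
  ring

lemma sq_mul_sq_smul_integral_exp_taylorWeight (w : ℂ) (x : ℝ) :
    w ^ 2 * (x ^ 2 • ∫ θ, exp (w * (θ * x : ℝ)) ∂taylorWeight) = exp (w * x) - 1 - w * x := by
  rw [← sq_mul_integral_exp_taylorWeight, real_smul]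
  push_cast
  simp only [mul_pow, mul_assoc, mul_comm (x : ℂ)]

end TaylorWeight

section LevyMGF

variable {K : Measure ℝ} [IsFiniteMeasure (sqMeasure K)]

lemma integrableExpSet_sqMeasure_subset : integrableExpSet id (sqMeasure K) ⊆
    integrableExpSet (fun q : ℝ × ℝ => q.2 * q.1) ((sqMeasure K).prod taylorWeight) := by
  intro s hs
  have hdom : Integrable (fun q : ℝ × ℝ => 1 + Real.exp (s * q.1))
      ((sqMeasure K).prod taylorWeight) :=
    ((integrable_const (1 : ℝ)).add hs).comp_fst taylorWeight
  refine hdom.mono' (by fun_prop) ?_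
  filter_upwards [Measure.quasiMeasurePreserving_snd.ae ae_taylorWeight_mem_Ioc] with q hq
  rw [Real.norm_eq_abs, Real.abs_exp]
  rcases le_total 0 (s * q.1) with h | h
  · have : s * (q.2 * q.1) ≤ s * q.1 := by nlinarith [hq.2]
    linarith [Real.exp_le_exp.2 this]
  · have : s * (q.2 * q.1) ≤ 0 := by nlinarith [hq.1]
    linarith [Real.exp_le_one_iff.2 this, Real.exp_pos (s * q.1)]

lemma expDomain_subset_interior_integrableExpSet : expDomain K ⊆
    interior (integrableExpSet (fun q : ℝ × ℝ => q.2 * q.1) ((sqMeasure K).prod taylorWeight)) :=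
  interior_mono integrableExpSet_sqMeasure_subset

lemma iteratedDeriv_levyMGF_zero (h0 : 0 ∈ expDomain K) (j : ℕ) :
    iteratedDeriv j (levyMGF K) 0 = (∫ x, x ^ (j + 2) ∂K : ℝ) / ((j + 1) * (j + 2)) := by
  rw [levyMGF, iteratedDeriv_complexMGF (expDomain_subset_interior_integrableExpSet h0)]
  have hmoment : ∫ x, (x : ℂ) ^ j ∂sqMeasure K = (∫ x, x ^ (j + 2) ∂K : ℝ) := by
    rw [integral_sqMeasure, ← integral_complex_ofReal]
    refine integral_congr_ae (.of_forall fun x => ?_)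
    simp only [real_smul]
    push_cast
    ring
  calc ∫ q : ℝ × ℝ, ((q.2 * q.1 : ℝ) : ℂ) ^ j * exp (0 * (q.2 * q.1 : ℝ))
        ∂(sqMeasure K).prod taylorWeight
      = ∫ q : ℝ × ℝ, (q.1 : ℂ) ^ j * (q.2 : ℂ) ^ j ∂(sqMeasure K).prod taylorWeight := by
        refine integral_congr_ae (.of_forall fun q => ?_)
        simp only [zero_mul, exp_zero, mul_one, ofReal_mul, mul_pow]
        exact mul_comm _ _
    _ = _ := by
        rw [integral_prod_mul (fun x : ℝ => (x : ℂ) ^ j) (fun θ : ℝ => (θ : ℂ) ^ j), hmoment,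
           integral_pow_taylorWeight, mul_one_div]

variable {w : ℂ}

lemma integrable_exp_mul_prod (hw : w.re ∈ integrableExpSet id (sqMeasure K)) :
    Integrable (fun q : ℝ × ℝ => exp (w * (q.2 * q.1 : ℝ)))
      ((sqMeasure K).prod taylorWeight) :=
  integrable_cexp_mul_of_re_mem_integrableExpSet (by fun_prop)
    (integrableExpSet_sqMeasure_subset hw)

lemma integrable_exp_sub_one_sub (hw : w.re ∈ integrableExpSet id (sqMeasure K)) :
    Integrable (fun x : ℝ => exp (w * x) - 1 - w * x) K := by
  have hslice := (integrable_exp_mul_prod hw).integral_prod_left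
  exact ((integrable_sqMeasure_iff.1 hslice).const_mul (w ^ 2)).congr
    (.of_forall fun x => sq_mul_sq_smul_integral_exp_taylorWeight w x)

lemma sq_mul_levyMGF (hw : w.re ∈ integrableExpSet id (sqMeasure K)) :
    w ^ 2 * levyMGF K w = ∫ x : ℝ, (exp (w * x) - 1 - w * x) ∂K := by
  rw [levyMGF, complexMGF, integral_prod _ (integrable_exp_mul_prod hw), integral_sqMeasure,
    ← integral_const_mul]
  simp only [sq_mul_sq_smul_integral_exp_taylorWeight]

end LevyMGF

section ExpDomain

variable {K : Measure ℝ}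

lemma integrable_exp_of_mem_expDomain {s : ℝ} (hs : s ∈ expDomain K) :
    Integrable (fun x => Real.exp (s * x)) (sqMeasure K) :=
  (interior_subset hs : s ∈ integrableExpSet id (sqMeasure K))

lemma convex_expDomain : Convex ℝ (expDomain K) := convex_integrableExpSet.interior

lemma mul_mem_expDomain {u r : ℝ} (hu : u ∈ Icc (0 : ℝ) 1) (h0 : 0 ∈ expDomain K)
    (hr : r ∈ expDomain K) : u * r ∈ expDomain K := by
  simpa only [smul_eq_mul] using
    convex_expDomain.smul_mem_of_zero_mem h0 hr hu

lemma midpoint_mem_expDomain {r₁ r₂ r : ℝ} (h₁ : r₁ ∈ expDomain K) (h₂ : r₂ ∈ expDomain K)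
    (hr : r = (r₁ + r₂) / 2) : r ∈ expDomain K := by
  rw [hr, div_eq_inv_mul, ← smul_eq_mul, ← invOf_eq_inv, ← midpoint_eq_smul_add]
  exact convex_expDomain.midpoint_mem h₁ h₂

lemma isFiniteMeasure_sqMeasure (h0 : 0 ∈ expDomain K) : IsFiniteMeasure (sqMeasure K) := by
  have hone : Integrable (fun _ : ℝ => (1 : ℝ)) (sqMeasure K) := by
    simpa [integrableExpSet] using interior_subset h0
  exact (integrable_const_iff_isFiniteMeasure one_ne_zero).1 hone

lemma integrable_of_lintegral_ofReal_ne_top {ν : Measure ℝ} {g : ℝ → ℝ} (hg : Measurable g)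
    (hg₀ : 0 ≤ g) (hfin : ∫⁻ x, ENNReal.ofReal (g x) ∂ν ≠ ⊤) : Integrable g ν :=
  (lintegral_ofReal_ne_top_iff_integrable hg.aestronglyMeasurable (.of_forall hg₀)).1 hfin

lemma Ioo_subset_expDomain {a b : ℝ}
    (hmin : ∫⁻ x : ℝ, ENNReal.ofReal (min 1 (x ^ 2)) ∂K ≠ ⊤)
    (hexp : ∀ s ∈ Ioo a b, ∫⁻ x in {x : ℝ | 1 ≤ |x|}, ENNReal.ofReal (Real.exp (s * x)) ∂K ≠ ⊤) :
    Ioo a b ⊆ expDomain K := by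
  refine interior_maximal (fun s hs => ?_) isOpen_Ioo
  have hlarge : Ioo a b ⊆ interior (integrableExpSet id (K.restrict {x : ℝ | 1 ≤ |x|})) :=
    interior_maximal (fun v hv => integrable_of_lintegral_ofReal_ne_top (by fun_prop)
      (fun x => (Real.exp_pos _).le) (hexp v hv)) isOpen_Ioo
  have hfar : IntegrableOn (fun x => x ^ 2 * Real.exp (s * x)) {x : ℝ | 1 ≤ |x|} K := by
    simpa only [IntegrableOn, id_eq, sq_abs] using
      integrable_pow_abs_mul_exp_of_mem_interior_integrableExpSet (hlarge hs) 2
  have hnear : IntegrableOn (fun x => x ^ 2 * Real.exp (s * x)) {x : ℝ | 1 ≤ |x|}ᶜ K := by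
    have hbound : Integrable (fun x : ℝ => min 1 (x ^ 2) * Real.exp |s|) K :=
      (integrable_of_lintegral_ofReal_ne_top (measurable_const.min (by fun_prop))
        (fun x => le_min zero_le_one (sq_nonneg x)) hmin).mul_const _
    refine hbound.integrableOn.mono' (by fun_prop) ?_
    filter_upwards [ae_restrict_mem (measurableSet_le (by fun_prop) (by fun_prop)).compl] with x hx
    have hx₁ : |x| ≤ 1 := le_of_not_ge hx
    rw [Real.norm_of_nonneg (by positivity), min_eq_right (sq_le_one_iff_abs_le_one x |>.2 hx₁)]
    gcongr
    calc s * x ≤ |s| * |x| := (le_abs_self _).trans_eq (abs_mul s x)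
      _ ≤ |s| := mul_le_of_le_one_right (abs_nonneg s) hx₁
  refine integrable_sqMeasure_iff.2 ?_
  have hunion := hfar.union hnear
  rwa [union_compl_self, integrableOn_univ] at hunion

end ExpDomain

section Cumulant

variable {μ c : ℝ} {K : Measure ℝ}

lemma kappa_zero (z : ℂ) :
    kappa μ c K 0 z = μ * z + (c + ∫ x, x ^ 2 ∂K : ℝ) / 2 * z ^ 2 := if_pos rfl

lemma kappa_ofReal {u : ℝ} (hu : u ≠ 0) (r : ℝ) : kappa μ c K u r =
    (μ * r + c / 2 * r ^ 2 +
      (u ^ 2)⁻¹ * ∫ x, (Real.exp (u * r * x) - 1 - u * r * x) ∂K : ℝ) := by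
  rw [kappa, if_neg hu]
  push_cast [← integral_complex_ofReal]
  rfl

lemma im_kappa_ofReal (u r : ℝ) : (kappa μ c K u r).im = 0 := by
  rcases eq_or_ne u 0 with rfl | hu
  · rw [kappa_zero]
    norm_cast
  · rw [kappa_ofReal hu, ofReal_im]

variable [IsFiniteMeasure (sqMeasure K)] {u u₀ r : ℝ} {z : ℂ}

lemma kappa_eq (h : ((u : ℂ) * z).re ∈ expDomain K) :
    kappa μ c K u z = μ * z + c / 2 * z ^ 2 + z ^ 2 * levyMGF K (u * z) := by
  rw [kappa]
  split_ifs with hu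
  · subst hu
    have hzero : levyMGF K 0 = (∫ x, x ^ 2 ∂K : ℝ) / 2 := by
      simpa using iteratedDeriv_levyMGF_zero (K := K) (by simpa using h) 0
    rw [ofReal_zero, zero_mul, hzero]
    push_cast
    ring
  · rw [← sq_mul_levyMGF (interior_subset h), mul_pow, mul_assoc,
      inv_mul_cancel_left₀ (pow_ne_zero 2 (ofReal_ne_zero.2 hu))]

/-- The `j`-th derivative of `kappa μ c K u z` in the parameter `u`, for `j ≥ 1`. -/
noncomputable def kappaDeriv (K : Measure ℝ) (j : ℕ) (u : ℝ) (z : ℂ) : ℂ :=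
  z ^ (j + 2) * iteratedDeriv j (levyMGF K) (u * z)

/-- The `j`-th derivative of `kbar μ c K u y z` in the parameter `u`, for `j ≥ 1`. -/
noncomputable def kbarDeriv (K : Measure ℝ) (j : ℕ) (u : ℝ) (y z : ℂ) : ℂ :=
  kappaDeriv K j u (y + z) - kappaDeriv K j u y - kappaDeriv K j u z

lemma temperedJetAt_kappa (h : u₀ * r ∈ expDomain K) :
    TemperedJetAt (fun u y => kappa μ c K u (zLine r y)) (fun u y => kappaDeriv K 1 u (zLine r y))
      (fun u y => kappaDeriv K 2 u (zLine r y)) u₀ := by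
  have hz : TemperedAt (fun _ y => zLine r y) u₀ := .zLine r
  have hquad : TemperedAt (fun _ y => μ * zLine r y + c / 2 * zLine r y ^ 2) u₀ :=
    ((TemperedAt.const _).mul hz).add ((TemperedAt.const _).mul (hz.pow 2))
  have hlevy := ((temperedJetAt_complexMGF
    (expDomain_subset_interior_integrableExpSet h)).const_mul (hz.pow 2)).const_add hquad
  have hjet := hlevy.congr ((eventually_re_mul_zLine_mem_interior h).mono
    fun u hu y => (kappa_eq (hu y)).symm)
  simpa only [← mul_assoc, ← pow_succ, ← pow_add] using! hjet

end Cumulant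

/-! ### Bounds for the exponent -/

section Positivity

variable {μ c : ℝ} {K : Measure ℝ} {u : ℝ}

lemma kbar_zero (y z : ℂ) : kbar μ c K 0 y z = (c + ∫ x, x ^ 2 ∂K : ℝ) * (y * z) := by
  simp only [kbar, kappa_zero]
  ring

lemma im_kbar_one_one (u : ℝ) : (kbar μ c K u 1 1).im = 0 := by
  have h₁ := im_kappa_ofReal (μ := μ) (c := c) (K := K) u 1
  have h₂ := im_kappa_ofReal (μ := μ) (c := c) (K := K) u 2
  simp only [ofReal_one, ofReal_ofNat] at h₁ h₂
  simp only [kbar, one_add_one_eq_two, sub_im, h₁, h₂, sub_zero]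

variable [IsFiniteMeasure (sqMeasure K)]

lemma integrable_rexp_sub_one_sub {v : ℝ} (hv : v ∈ expDomain K) :
    Integrable (fun x => Real.exp (v * x) - 1 - v * x) K := by
  refine (integrable_exp_sub_one_sub (w := v) (interior_subset hv)).re.congr
    (.of_forall fun x => ?_)
  simp only [RCLike.re_to_complex]
  norm_cast

lemma sq_rexp_sub_one (v x : ℝ) : (Real.exp (v * x) - 1) ^ 2 =
    (Real.exp (v * 2 * x) - 1 - v * 2 * x) - 2 * (Real.exp (v * x) - 1 - v * x) := by
  rw [show v * 2 * x = v * x + v * x by ring, Real.exp_add]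
  ring

lemma integrable_sq_rexp_sub_one (h₁ : u ∈ expDomain K) (h₂ : u * 2 ∈ expDomain K) :
    Integrable (fun x => (Real.exp (u * x) - 1) ^ 2) K := by
  simp only [sq_rexp_sub_one]
  exact (integrable_rexp_sub_one_sub h₂).sub ((integrable_rexp_sub_one_sub h₁).const_mul 2)

lemma kbar_one_one (hu : u ≠ 0) (h₁ : u ∈ expDomain K) (h₂ : u * 2 ∈ expDomain K) :
    kbar μ c K u 1 1 = (c + (u ^ 2)⁻¹ * ∫ x, (Real.exp (u * x) - 1) ^ 2 ∂K : ℝ) := by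
  have hκ₁ := kappa_ofReal (μ := μ) (c := c) (K := K) hu 1
  have hκ₂ := kappa_ofReal (μ := μ) (c := c) (K := K) hu 2
  simp only [ofReal_one, mul_one, ofReal_ofNat] at hκ₁ hκ₂
  simp only [sq_rexp_sub_one]
  rw [integral_sub (integrable_rexp_sub_one_sub h₂) ((integrable_rexp_sub_one_sub h₁).const_mul 2),
    integral_const_mul, kbar, one_add_one_eq_two, hκ₁, hκ₂]
  push_cast
  ring

lemma re_kbar_one_one_pos (hc : 0 ≤ c) (hσ : 0 < c + ∫ x, x ^ 2 ∂K) (h₁ : u ∈ expDomain K)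
    (h₂ : u * 2 ∈ expDomain K) : 0 < (kbar μ c K u 1 1).re := by
  rcases eq_or_ne u 0 with rfl | hu
  · rwa [kbar_zero, mul_one, mul_one, ofReal_re]
  rw [kbar_one_one hu h₁ h₂, ofReal_re]
  have hsq : 0 ≤ fun x => (Real.exp (u * x) - 1) ^ 2 := fun x => sq_nonneg _
  have hjump : 0 ≤ (u ^ 2)⁻¹ * ∫ x, (Real.exp (u * x) - 1) ^ 2 ∂K :=
    mul_nonneg (by positivity) (integral_nonneg hsq)
  refine (add_nonneg hc hjump).lt_of_ne' fun hzero => hσ.ne' ?_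
  have hc₀ : c = 0 := by linarith
  have hint : ∫ x, (Real.exp (u * x) - 1) ^ 2 ∂K = 0 := by simpa [hc₀, hu] using hzero
  have hae := (integral_eq_zero_iff_of_nonneg hsq (integrable_sq_rexp_sub_one h₁ h₂)).1 hint
  have hK : ∀ᵐ x ∂K, x ^ 2 = 0 := by
    filter_upwards [hae] with x hx
    simpa [sub_eq_zero, hu] using hx
  rw [hc₀, zero_add, integral_eq_zero_of_ae hK]

end Positivity

lemma abs_rexp_sub_one_sub_le (v : ℝ) : |Real.exp v - 1 - v| ≤ v ^ 2 * (1 + Real.exp v) := by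
  have hlower := Real.add_one_le_exp v
  have hupper : Real.exp v - 1 ≤ v * Real.exp v := by
    have h := mul_le_mul_of_nonneg_right (Real.one_sub_le_exp_neg v) (Real.exp_pos v).le
    rw [← Real.exp_add, neg_add_cancel, Real.exp_zero] at h
    linarith
  have hv : v * (Real.exp v - 1) ≤ v ^ 2 * (1 + Real.exp v) := by
    rcases le_total 0 v with h | h
    · nlinarith [mul_le_mul_of_nonneg_left hupper h]
    · nlinarith [mul_le_mul_of_nonpos_left hlower h, mul_nonneg (sq_nonneg v) (Real.exp_pos v).le]
  rw [abs_of_nonneg (by linarith)]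
  linarith

lemma one_sub_cos_mul_le (A b v : ℝ) : (1 - Real.cos b) * (A * (Real.exp v - 1) - 1) ≤
    (A ^ 2 / 2 + 2 * |A|) * (v ^ 2 * (1 + Real.exp v)) := by
  have hexp : A * (Real.exp v - 1 - v) ≤ |A| * (v ^ 2 * (1 + Real.exp v)) :=
    (le_abs_self _).trans ((abs_mul _ _).trans_le (by gcongr; exact abs_rexp_sub_one_sub_le v))
  have hsquare : A * v - 1 ≤ A ^ 2 / 4 * v ^ 2 := by nlinarith [sq_nonneg (A * v - 2)]
  calc (1 - Real.cos b) * (A * (Real.exp v - 1) - 1)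
      ≤ (1 - Real.cos b) * (A ^ 2 / 4 * v ^ 2 + |A| * (v ^ 2 * (1 + Real.exp v))) := by
        gcongr
        · exact sub_nonneg.2 (Real.cos_le_one b)
        · linarith
    _ ≤ 2 * (A ^ 2 / 4 * v ^ 2 + |A| * (v ^ 2 * (1 + Real.exp v))) := by
        gcongr
        linarith [Real.neg_one_le_cos b]
    _ ≤ (A ^ 2 / 2 + 2 * |A|) * (v ^ 2 * (1 + Real.exp v)) := by
        have : 0 ≤ A ^ 2 / 2 * (v ^ 2 * Real.exp v) := by positivity
        linarith

/-- The ratio `κ(u, 1) / κ̄(u; 1, 1)` of drift to variance, which is real. -/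
noncomputable def driftVarianceRatio (μ c : ℝ) (K : Measure ℝ) (u : ℝ) : ℝ :=
  (kappa μ c K u 1).re / (kbar μ c K u 1 1).re

section EtaBound

variable {μ c : ℝ} {K : Measure ℝ} {u u₀ : ℝ}

lemma re_etaLK_zLine (R y : ℝ) : (etaLK μ c K u (zLine R y)).re =
    (1 + driftVarianceRatio μ c K u) * (kappa μ c K u (zLine R y)).re
      - driftVarianceRatio μ c K u * (kappa μ c K u (zLine (R + 1) y)).re
      + driftVarianceRatio μ c K u * (kappa μ c K u 1).re := by
  have hκ : kappa μ c K u 1 = (kappa μ c K u 1).re :=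
    Complex.ext rfl (by simpa using im_kappa_ofReal (μ := μ) (c := c) (K := K) u 1)
  have hk : kbar μ c K u 1 1 = (kbar μ c K u 1 1).re := Complex.ext rfl (im_kbar_one_one u)
  have hratio : kappa μ c K u 1 * gamLK μ c K u (zLine R y) =
      driftVarianceRatio μ c K u * kbar μ c K u (zLine R y) 1 := by
    rw [gamLK, driftVarianceRatio, ofReal_div, ← hκ, ← hk]
    ring
  rw [etaLK, hratio, sub_re, re_ofReal_mul, kbar, zLine_add_one, sub_re, sub_re]
  ring

lemma re_exp_mul_zLine_sub (u r y x : ℝ) :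
    (exp (u * zLine r y * x) - 1 - u * zLine r y * x).re =
      Real.exp (u * r * x) * Real.cos (u * y * x) - 1 - u * r * x := by
  simp [exp_re, zLine]

variable {r R : ℝ}

lemma re_mul_zLine_mem (hr : u * r ∈ expDomain K) (y : ℝ) :
    ((u : ℂ) * zLine r y).re ∈ integrableExpSet id (sqMeasure K) := by
  rw [re_ofReal_mul_zLine]
  exact interior_subset hr

variable [IsFiniteMeasure (sqMeasure K)]

lemma integrable_re_exp_mul_zLine (y : ℝ) (hr : u * r ∈ expDomain K) :
    Integrable (fun x => Real.exp (u * r * x) * Real.cos (u * y * x) - 1 - u * r * x) K := by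
  simpa only [RCLike.re_to_complex, re_exp_mul_zLine_sub] using
    (integrable_exp_sub_one_sub (re_mul_zLine_mem hr y)).re

lemma re_kappa_zLine (hu : u ≠ 0) (y : ℝ) (hr : u * r ∈ expDomain K) :
    (kappa μ c K u (zLine r y)).re = μ * r + c / 2 * (r ^ 2 - y ^ 2) +
      (u ^ 2)⁻¹ * ∫ x, (Real.exp (u * r * x) * Real.cos (u * y * x) - 1 - u * r * x) ∂K := by
  have hint := integral_re (integrable_exp_sub_one_sub (re_mul_zLine_mem hr y))
  simp only [RCLike.re_to_complex, re_exp_mul_zLine_sub] at hint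
  rw [kappa, if_neg hu, add_re, add_re, hint, ← ofReal_pow, ← ofReal_inv, re_ofReal_mul]
  simp [zLine, sq]

lemma integrable_exp_mul_one_sub_cos (y : ℝ) (hr : u * r ∈ expDomain K) :
    Integrable (fun x => Real.exp (u * r * x) * (1 - Real.cos (u * y * x))) K := by
  refine ((integrable_rexp_sub_one_sub hr).sub (integrable_re_exp_mul_zLine y hr)).congr
    (.of_forall fun x => ?_)
  simp only [Pi.sub_apply]
  ring

lemma re_kappa_zLine_sub (hu : u ≠ 0) (y : ℝ) (hr : u * r ∈ expDomain K) :
    (kappa μ c K u (zLine r y)).re - (kappa μ c K u r).re = -(c / 2 * y ^ 2) -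
      (u ^ 2)⁻¹ * ∫ x, Real.exp (u * r * x) * (1 - Real.cos (u * y * x)) ∂K := by
  have hdrop : ∫ x, Real.exp (u * r * x) * (1 - Real.cos (u * y * x)) ∂K =
      ∫ x, (Real.exp (u * r * x) - 1 - u * r * x) ∂K -
        ∫ x, (Real.exp (u * r * x) * Real.cos (u * y * x) - 1 - u * r * x) ∂K := by
    rw [← integral_sub (integrable_rexp_sub_one_sub hr) (integrable_re_exp_mul_zLine y hr)]
    exact integral_congr_ae (.of_forall fun x => by ring)
  rw [re_kappa_zLine hu y hr, kappa_ofReal hu, ofReal_re, hdrop]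
  ring

lemma integral_one_sub_cos_le (A y : ℝ) (hR : u * R ∈ expDomain K)
    (hR₁ : u * (R + 1) ∈ expDomain K) :
    A * ∫ x, Real.exp (u * (R + 1) * x) * (1 - Real.cos (u * y * x)) ∂K -
        (1 + A) * ∫ x, Real.exp (u * R * x) * (1 - Real.cos (u * y * x)) ∂K ≤
      u ^ 2 * ((A ^ 2 / 2 + 2 * |A|) *
        (mgf id (sqMeasure K) (u * R) + mgf id (sqMeasure K) (u * (R + 1)))) := by
  have hcos (r : ℝ) (hr : u * r ∈ expDomain K) := integrable_exp_mul_one_sub_cos y hr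
  have hexp (r : ℝ) (hr : u * r ∈ expDomain K) :
      Integrable (fun x => x ^ 2 * Real.exp (u * r * x)) K :=
    integrable_sqMeasure_iff.1 (integrable_exp_of_mem_expDomain hr)
  have hmgf (r : ℝ) : mgf id (sqMeasure K) (u * r) = ∫ x, x ^ 2 * Real.exp (u * r * x) ∂K :=
    integral_sqMeasure _
  rw [hmgf, hmgf, ← integral_add (hexp R hR) (hexp (R + 1) hR₁), ← integral_const_mul,
    ← integral_const_mul, ← integral_const_mul, ← integral_const_mul, ← integral_sub
    ((hcos (R + 1) hR₁).const_mul A) ((hcos R hR).const_mul (1 + A))]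
  refine integral_mono (((hcos (R + 1) hR₁).const_mul A).sub ((hcos R hR).const_mul (1 + A)))
    ((((hexp R hR).add (hexp (R + 1) hR₁)).const_mul _).const_mul _) fun x => ?_
  have hsplit : Real.exp (u * (R + 1) * x) = Real.exp (u * R * x) * Real.exp (u * x) := by
    rw [← Real.exp_add]
    ring_nf
  have hmul := mul_le_mul_of_nonneg_left (one_sub_cos_mul_le A (u * y * x) (u * x))
    (Real.exp_pos (u * R * x)).le
  simp only [hsplit]
  linarith

lemma re_etaLK_zLine_le (hc : 0 ≤ c) (y : ℝ) (hR : u * R ∈ expDomain K)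
    (hR₁ : u * (R + 1) ∈ expDomain K) :
    (etaLK μ c K u (zLine R y)).re ≤ (etaLK μ c K u R).re +
      (driftVarianceRatio μ c K u ^ 2 / 2 + 2 * |driftVarianceRatio μ c K u|) *
        (mgf id (sqMeasure K) (u * R) + mgf id (sqMeasure K) (u * (R + 1))) := by
  have hbase := re_etaLK_zLine (μ := μ) (c := c) (K := K) (u := u) R 0
  rw [zLine_zero, zLine_zero] at hbase
  rw [re_etaLK_zLine, hbase]
  set A := driftVarianceRatio μ c K u
  rcases eq_or_ne u 0 with rfl | hu
  · have hmgf : 0 ≤ (A ^ 2 / 2 + 2 * |A|) *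
        (mgf id (sqMeasure K) (0 * R) + mgf id (sqMeasure K) (0 * (R + 1))) :=
      mul_nonneg (by positivity) (add_nonneg mgf_nonneg mgf_nonneg)
    have hdrop (r : ℝ) : (kappa μ c K 0 (zLine r y)).re - (kappa μ c K 0 r).re =
        -((c + ∫ x, x ^ 2 ∂K) / 2 * y ^ 2) := by
      simp [kappa_zero, zLine, sq]
      ring
    have hgauss : 0 ≤ (c + ∫ x, x ^ 2 ∂K) / 2 * y ^ 2 := by
      have := integral_nonneg (μ := K) (f := fun x : ℝ => x ^ 2) fun x => sq_nonneg x
      positivity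
    linear_combination hmgf + hgauss + (1 + A) * hdrop R - A * hdrop (R + 1)
  · have hjump := mul_le_mul_of_nonneg_left (integral_one_sub_cos_le A y hR hR₁)
      (inv_nonneg.2 (sq_nonneg u))
    rw [inv_mul_cancel_left₀ (pow_ne_zero 2 hu)] at hjump
    have hgauss : 0 ≤ c / 2 * y ^ 2 := by positivity
    linear_combination hjump + hgauss + (1 + A) * re_kappa_zLine_sub (μ := μ) (c := c) hu y hR
      - A * re_kappa_zLine_sub (μ := μ) (c := c) hu y hR₁

end EtaBound

/-! ### Derivatives of the hedge integrand -/

/-- First derivative of `gamLK μ c K u z` in the parameter `u`. -/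
noncomputable def gamDeriv₁ (μ c : ℝ) (K : Measure ℝ) (u : ℝ) (z : ℂ) : ℂ :=
  kbarDeriv K 1 u z 1 * (kbar μ c K u 1 1)⁻¹ +
    kbar μ c K u z 1 * -(kbarDeriv K 1 u 1 1 / kbar μ c K u 1 1 ^ 2)

/-- Second derivative of `gamLK μ c K u z` in the parameter `u`. -/
noncomputable def gamDeriv₂ (μ c : ℝ) (K : Measure ℝ) (u : ℝ) (z : ℂ) : ℂ :=
  kbarDeriv K 2 u z 1 * (kbar μ c K u 1 1)⁻¹ +
    2 * (kbarDeriv K 1 u z 1 * -(kbarDeriv K 1 u 1 1 / kbar μ c K u 1 1 ^ 2)) +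
    kbar μ c K u z 1 * (2 * kbarDeriv K 1 u 1 1 ^ 2 / kbar μ c K u 1 1 ^ 3 -
      kbarDeriv K 2 u 1 1 / kbar μ c K u 1 1 ^ 2)

/-- First derivative of `etaLK μ c K u z` in the parameter `u`. -/
noncomputable def etaDeriv₁ (μ c : ℝ) (K : Measure ℝ) (u : ℝ) (z : ℂ) : ℂ :=
  kappaDeriv K 1 u z -
    (kappaDeriv K 1 u 1 * gamLK μ c K u z + kappa μ c K u 1 * gamDeriv₁ μ c K u z)

/-- Second derivative of `etaLK μ c K u z` in the parameter `u`. -/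
noncomputable def etaDeriv₂ (μ c : ℝ) (K : Measure ℝ) (u : ℝ) (z : ℂ) : ℂ :=
  kappaDeriv K 2 u z -
    (kappaDeriv K 2 u 1 * gamLK μ c K u z + 2 * (kappaDeriv K 1 u 1 * gamDeriv₁ μ c K u z) +
      kappa μ c K u 1 * gamDeriv₂ μ c K u z)

/-- First derivative of `gamLK μ c K u z * exp (τ * etaLK μ c K u z)` in the parameter `u`,
the exponential factored out. -/
noncomputable def hedgeDeriv₁ (μ c : ℝ) (K : Measure ℝ) (τ u : ℝ) (z : ℂ) : ℂ :=
  gamDeriv₁ μ c K u z + gamLK μ c K u z * (τ * etaDeriv₁ μ c K u z)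

/-- Second derivative of `gamLK μ c K u z * exp (τ * etaLK μ c K u z)` in the parameter `u`,
the exponential factored out. -/
noncomputable def hedgeDeriv₂ (μ c : ℝ) (K : Measure ℝ) (τ u : ℝ) (z : ℂ) : ℂ :=
  gamDeriv₂ μ c K u z + 2 * (gamDeriv₁ μ c K u z * (τ * etaDeriv₁ μ c K u z)) +
    gamLK μ c K u z * ((τ * etaDeriv₁ μ c K u z) ^ 2 + τ * etaDeriv₂ μ c K u z)

section HedgeJets

variable {μ c : ℝ} {K : Measure ℝ} [IsFiniteMeasure (sqMeasure K)] {R u₀ : ℝ}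

lemma temperedJetAt_kappa_one (h₁ : u₀ ∈ expDomain K) :
    TemperedJetAt (fun u _ => kappa μ c K u 1) (fun u _ => kappaDeriv K 1 u 1)
      (fun u _ => kappaDeriv K 2 u 1) u₀ := by
  simpa only [zLine_zero, ofReal_one] using
    (temperedJetAt_kappa (μ := μ) (c := c) (r := 1) (by rwa [mul_one])).freeze 0

lemma temperedJetAt_kbar (h₁ : u₀ ∈ expDomain K) (hR : u₀ * R ∈ expDomain K)
    (hR₁ : u₀ * (R + 1) ∈ expDomain K) :
    TemperedJetAt (fun u y => kbar μ c K u (zLine R y) 1) (fun u y => kbarDeriv K 1 u (zLine R y) 1)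
      (fun u y => kbarDeriv K 2 u (zLine R y) 1) u₀ := by
  simpa only [kbar, kbarDeriv, zLine_add_one] using
    ((temperedJetAt_kappa hR₁).sub (temperedJetAt_kappa hR)).sub (temperedJetAt_kappa_one h₁)

lemma temperedJetAt_kbar_one_one (h₁ : u₀ ∈ expDomain K) (h₂ : u₀ * 2 ∈ expDomain K) :
    TemperedJetAt (fun u _ => kbar μ c K u 1 1) (fun u _ => kbarDeriv K 1 u 1 1)
      (fun u _ => kbarDeriv K 2 u 1 1) u₀ := by
  simpa only [zLine_zero, ofReal_one] using
    (temperedJetAt_kbar (μ := μ) (c := c) (R := 1) h₁ (by rwa [mul_one])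
      (by rwa [one_add_one_eq_two])).freeze 0

variable (hc : 0 ≤ c) (hσ : 0 < c + ∫ x, x ^ 2 ∂K) (h₁ : u₀ ∈ expDomain K)
  (h₂ : u₀ * 2 ∈ expDomain K) (hR : u₀ * R ∈ expDomain K) (hR₁ : u₀ * (R + 1) ∈ expDomain K)
include hc hσ h₁ h₂ hR hR₁

lemma temperedJetAt_gamLK :
    TemperedJetAt (fun u y => gamLK μ c K u (zLine R y))
      (fun u y => gamDeriv₁ μ c K u (zLine R y)) (fun u y => gamDeriv₂ μ c K u (zLine R y)) u₀ := by
  have hne : kbar μ c K u₀ 1 1 ≠ 0 := fun h =>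
    (re_kbar_one_one_pos (μ := μ) hc hσ h₁ h₂).ne' (by rw [h, zero_re])
  exact (temperedJetAt_kbar h₁ hR hR₁).mul ((temperedJetAt_kbar_one_one h₁ h₂).inv hne)

lemma temperedJetAt_etaLK :
    TemperedJetAt (fun u y => etaLK μ c K u (zLine R y))
      (fun u y => etaDeriv₁ μ c K u (zLine R y)) (fun u y => etaDeriv₂ μ c K u (zLine R y)) u₀ :=
  (temperedJetAt_kappa hR).sub
    ((temperedJetAt_kappa_one h₁).mul (temperedJetAt_gamLK hc hσ h₁ h₂ hR hR₁))

lemma exists_eventually_re_etaLK_le :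
    ∃ C : ℝ, ∀ᶠ u in 𝓝 u₀, ∀ y, (etaLK μ c K u (zLine R y)).re ≤ C := by
  have hη : ContinuousAt (fun u => (etaLK μ c K u R).re) u₀ := by
    simpa only [zLine_zero, Function.comp_def] using continuous_re.continuousAt.comp
      ((temperedJetAt_etaLK (μ := μ) hc hσ h₁ h₂ hR hR₁).continuousAt₀ 0)
  have hratio : ContinuousAt (driftVarianceRatio μ c K) u₀ :=
    (continuous_re.continuousAt.comp ((temperedJetAt_kappa_one h₁).continuousAt₀ 0)).div
      (continuous_re.continuousAt.comp ((temperedJetAt_kbar_one_one h₁ h₂).continuousAt₀ 0))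
      (re_kbar_one_one_pos hc hσ h₁ h₂).ne'
  have hmul (r : ℝ) : ContinuousAt (fun u : ℝ => u * r) u₀ := (continuous_mul_const r).continuousAt
  have hmgf {r : ℝ} (hr : u₀ * r ∈ expDomain K) :
      ContinuousAt (fun u => mgf id (sqMeasure K) (u * r)) u₀ :=
    (continuousOn_mgf.continuousAt (isOpen_interior.mem_nhds hr)).comp'
      (f := fun u => u * r) (hmul r)
  let B (u : ℝ) : ℝ := (etaLK μ c K u R).re +
    (driftVarianceRatio μ c K u ^ 2 / 2 + 2 * |driftVarianceRatio μ c K u|) *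
      (mgf id (sqMeasure K) (u * R) + mgf id (sqMeasure K) (u * (R + 1)))
  have hB : ContinuousAt B u₀ := hη.fun_add ((((hratio.fun_pow 2).div_const 2).fun_add
    (hratio.abs.const_mul 2)).fun_mul ((hmgf hR).fun_add (hmgf hR₁)))
  refine ⟨B u₀ + 1, ?_⟩
  filter_upwards [hB.eventually_le_const (lt_add_one (B u₀)),
    (hmul R).eventually_mem (isOpen_interior.mem_nhds hR),
    (hmul (R + 1)).eventually_mem (isOpen_interior.mem_nhds hR₁)] with u hu huR huR₁ y
  exact (re_etaLK_zLine_le hc y huR huR₁).trans hu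

lemma temperedJetAt_hedge {τ : ℝ} (hτ : 0 ≤ τ) :
    TemperedJetAt
      (fun u y => gamLK μ c K u (zLine R y) * exp (τ * etaLK μ c K u (zLine R y)))
      (fun u y => hedgeDeriv₁ μ c K τ u (zLine R y) * exp (τ * etaLK μ c K u (zLine R y)))
      (fun u y => hedgeDeriv₂ μ c K τ u (zLine R y) * exp (τ * etaLK μ c K u (zLine R y)))
      u₀ := by
  obtain ⟨C, hC⟩ := exists_eventually_re_etaLK_le (μ := μ) hc hσ h₁ h₂ hR hR₁
  have hbound : ∀ᶠ u in 𝓝 u₀, ∀ y, (τ * etaLK μ c K u (zLine R y)).re ≤ τ * C :=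
    hC.mono fun u hu y => by
      rw [re_ofReal_mul]
      exact mul_le_mul_of_nonneg_left (hu y) hτ
  convert (temperedJetAt_gamLK hc hσ h₁ h₂ hR hR₁).mul
    (((temperedJetAt_etaLK hc hσ h₁ h₂ hR hR₁).const_mul (.const τ)).exp hbound) using 3
  · rw [hedgeDeriv₁]
    ring
  · rw [hedgeDeriv₂]
    ring

end HedgeJets

/-! ### The expansion at the Gaussian limit -/

/-- First derivative at `0` of `gamLK * exp (τ * etaLK)` in terms of volatility, normalised drift
and skewness, expanded in falling factorials. -/
noncomputable def hedgePoly₁ (σ m s₃ τ : ℂ) : ℂ[X] :=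
  (s₃ * σ) • ((1 / 2 : ℂ) • descPochhammer ℂ 2 + (σ ^ 2 * τ) •
    ((1 - m) • descPochhammer ℂ 2 + (1 - m / 2) • descPochhammer ℂ 3 +
      (1 / 6 : ℂ) • descPochhammer ℂ 4))

/-- Second derivative at `0` of `gamLK * exp (τ * etaLK)` in terms of volatility, normalised drift,
skewness and kurtosis, expanded in falling factorials. -/
noncomputable def hedgePoly₂ (σ m s₃ s₄ τ : ℂ) : ℂ[X] :=
  (s₃ ^ 2 * σ ^ 2) • ((-1 : ℂ) • descPochhammer ℂ 2 + (σ ^ 2 * τ) •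
    ((2 / 3 + m) • descPochhammer ℂ 2 + (17 / 6 - m) • descPochhammer ℂ 3 +
      (3 / 2 - m / 2) • descPochhammer ℂ 4 + (1 / 6 : ℂ) • descPochhammer ℂ 5)) +
  (s₃ ^ 2 * σ ^ 6 * τ ^ 2) •
    ((1 - 2 * m + m ^ 2) • descPochhammer ℂ 2 +
      (7 - 10 * m + 7 / 2 * m ^ 2) • descPochhammer ℂ 3 +
      (55 / 6 - 9 * m + 2 * m ^ 2) • descPochhammer ℂ 4 +
      (23 / 6 - 7 / 3 * m + m ^ 2 / 4) • descPochhammer ℂ 5 +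
      (7 / 12 - m / 6) • descPochhammer ℂ 6 + (1 / 36 : ℂ) • descPochhammer ℂ 7) +
  (s₄ * σ ^ 2) • (((3 / 2 : ℂ) • descPochhammer ℂ 2 + (1 / 3 : ℂ) • descPochhammer ℂ 3) +
    (σ ^ 2 * τ) •
      ((7 / 6 - 3 * m) • descPochhammer ℂ 2 + (25 / 12 - 5 / 2 * m) • descPochhammer ℂ 3 +
        (5 / 6 - m / 3) • descPochhammer ℂ 4 + (1 / 12 : ℂ) • descPochhammer ℂ 5))

section AtZero

variable {μ c : ℝ} {K : Measure ℝ} {σ m s₃ s₄ : ℝ}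

lemma kappa_zero_one (hσ : c + ∫ x, x ^ 2 ∂K = σ ^ 2) (hm : μ + σ ^ 2 / 2 = m * σ ^ 2) :
    kappa μ c K 0 1 = m * σ ^ 2 := by
  rw [kappa_zero, hσ, mul_one, one_pow, mul_one]
  exact_mod_cast hm

section GaussianLimit

variable (hσ₀ : σ ≠ 0) (hσ : c + ∫ x, x ^ 2 ∂K = σ ^ 2)
include hσ₀ hσ

lemma gamLK_zero (z : ℂ) : gamLK μ c K 0 z = z := by
  have hσ' : (σ : ℂ) ≠ 0 := ofReal_ne_zero.2 hσ₀
  rw [gamLK, kbar_zero, kbar_zero, hσ]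
  push_cast
  field_simp

lemma etaLK_zero (z : ℂ) : etaLK μ c K 0 z = (σ ^ 2 / 2 : ℝ) * (z * (z - 1)) := by
  rw [etaLK, gamLK_zero hσ₀ hσ, kappa_zero, kappa_zero, hσ]
  push_cast
  ring

end GaussianLimit

variable [IsFiniteMeasure (sqMeasure K)] (h0 : 0 ∈ expDomain K)
include h0

lemma kappaDeriv_zero (j : ℕ) (z : ℂ) :
    kappaDeriv K j 0 z = z ^ (j + 2) * ((∫ x, x ^ (j + 2) ∂K : ℝ) / ((j + 1) * (j + 2))) := by
  rw [kappaDeriv, ofReal_zero, zero_mul, iteratedDeriv_levyMGF_zero h0]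

lemma kappaDeriv_one_zero (hs₃ : ∫ x, x ^ 3 ∂K = s₃ * σ ^ 3) (z : ℂ) :
    kappaDeriv K 1 0 z = s₃ * σ ^ 3 / 6 * z ^ 3 := by
  rw [kappaDeriv_zero h0, hs₃]
  push_cast
  ring

lemma kappaDeriv_two_zero (hs₄ : ∫ x, x ^ 4 ∂K = s₄ * σ ^ 4) (z : ℂ) :
    kappaDeriv K 2 0 z = s₄ * σ ^ 4 / 12 * z ^ 4 := by
  rw [kappaDeriv_zero h0, hs₄]
  push_cast
  ring

variable (hσ₀ : σ ≠ 0) (hσ : c + ∫ x, x ^ 2 ∂K = σ ^ 2) (hs₃ : ∫ x, x ^ 3 ∂K = s₃ * σ ^ 3)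
include hσ₀ hσ hs₃

lemma gamDeriv₁_zero (z : ℂ) : gamDeriv₁ μ c K 0 z = s₃ * σ / 2 * (z * (z - 1)) := by
  have hσ' : (σ : ℂ) ≠ 0 := ofReal_ne_zero.2 hσ₀
  simp only [gamDeriv₁, kbarDeriv, kbar_zero, hσ, kappaDeriv_one_zero h0 hs₃]
  push_cast
  field_simp
  ring

lemma gamDeriv₂_zero (hs₄ : ∫ x, x ^ 4 ∂K = s₄ * σ ^ 4) (z : ℂ) : gamDeriv₂ μ c K 0 z =
    z * (z - 1) * (s₄ * σ ^ 2 * (2 * z + 5) / 6 - s₃ ^ 2 * σ ^ 2) := by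
  have hσ' : (σ : ℂ) ≠ 0 := ofReal_ne_zero.2 hσ₀
  simp only [gamDeriv₂, kbarDeriv, kbar_zero, hσ, kappaDeriv_one_zero h0 hs₃,
    kappaDeriv_two_zero h0 hs₄]
  push_cast
  field_simp
  ring

variable (hm : μ + σ ^ 2 / 2 = m * σ ^ 2)
include hm

lemma etaDeriv₁_zero (z : ℂ) : etaDeriv₁ μ c K 0 z =
    s₃ * σ ^ 3 * (z * (z - 1)) * ((z + 1) / 6 - m / 2) := by
  rw [etaDeriv₁, kappaDeriv_one_zero h0 hs₃, kappaDeriv_one_zero h0 hs₃, gamLK_zero hσ₀ hσ,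
    kappa_zero_one hσ hm, gamDeriv₁_zero h0 hσ₀ hσ hs₃]
  ring

lemma eval_hedgePoly₁ (τ : ℝ) (z : ℂ) :
    (hedgePoly₁ σ m s₃ τ).eval z = hedgeDeriv₁ μ c K τ 0 z := by
  rw [hedgeDeriv₁, gamLK_zero hσ₀ hσ, gamDeriv₁_zero h0 hσ₀ hσ hs₃,
    etaDeriv₁_zero h0 hσ₀ hσ hs₃ hm]
  simp only [hedgePoly₁, eval_add, eval_smul, smul_eq_mul, descPochhammer_eval_eq_prod_range,
    Finset.prod_range_succ, Finset.prod_range_zero]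
  push_cast
  ring

variable (hs₄ : ∫ x, x ^ 4 ∂K = s₄ * σ ^ 4)
include hs₄

lemma etaDeriv₂_zero (z : ℂ) : etaDeriv₂ μ c K 0 z =
    s₄ * σ ^ 4 * (z * (z - 1)) * ((z ^ 2 + z + 1) / 12 - m * (2 * z + 5) / 6) +
      s₃ ^ 2 * σ ^ 4 * (z * (z - 1)) * (m - 1 / 6) := by
  rw [etaDeriv₂, kappaDeriv_two_zero h0 hs₄, kappaDeriv_two_zero h0 hs₄,
    kappaDeriv_one_zero h0 hs₃, gamLK_zero hσ₀ hσ, kappa_zero_one hσ hm,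
    gamDeriv₁_zero h0 hσ₀ hσ hs₃, gamDeriv₂_zero h0 hσ₀ hσ hs₃ hs₄]
  ring

lemma eval_hedgePoly₂ (τ : ℝ) (z : ℂ) :
    (hedgePoly₂ σ m s₃ s₄ τ).eval z = hedgeDeriv₂ μ c K τ 0 z := by
  rw [hedgeDeriv₂, gamLK_zero hσ₀ hσ, gamDeriv₁_zero h0 hσ₀ hσ hs₃,
    gamDeriv₂_zero h0 hσ₀ hσ hs₃ hs₄, etaDeriv₁_zero h0 hσ₀ hσ hs₃ hm,
    etaDeriv₂_zero h0 hσ₀ hσ hs₃ hm hs₄]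
  simp only [hedgePoly₂, eval_add, eval_smul, smul_eq_mul, descPochhammer_eval_eq_prod_range,
    Finset.prod_range_succ, Finset.prod_range_zero]
  push_cast
  ring

end AtZero

section Weight

variable {p : ℝ → ℂ} {s : ℝ}

lemma cpowR_eq_mul_cpowR_sub_one (hs : 0 < s) (z : ℂ) : cpowR s z = s * cpowR s (z - 1) := by
  rw [cpowR, cpowR, sub_mul, exp_sub, one_mul, ← ofReal_exp, Real.exp_log hs,
    mul_div_cancel₀ _ (ofReal_ne_zero.2 hs.ne')]

lemma RapidDecay.cpowR_zLine_sub_one_mul (hp : RapidDecay p) (s R : ℝ) :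
    RapidDecay fun y => cpowR s (zLine R y - 1) * p y := by
  refine hp.mul_of_bounded (C := Real.exp ((R - 1) * Real.log s)) ?_ fun y => ?_
  · unfold cpowR
    exact (((continuous_zLine R).sub continuous_const).mul continuous_const).cexp
  · rw [cpowR, norm_exp, re_mul_ofReal, sub_re, zLine_re, one_re]

lemma RapidDecay.exp_zLine_mul (hp : RapidDecay p) {τ : ℝ} (hτ : 0 ≤ τ) (σ R : ℝ) :
    RapidDecay fun y => exp (τ * ((σ ^ 2 / 2 : ℝ) * (zLine R y * (zLine R y - 1)))) * p y := by
  refine hp.mul_of_bounded (C := Real.exp (τ * (σ ^ 2 / 2 * (R * (R - 1))))) ?_ fun y => ?_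
  · have := continuous_zLine R
    fun_prop
  · have hre : (zLine R y * (zLine R y - 1)).re = R * (R - 1) - y * y := by simp [zLine]
    rw [norm_exp, re_ofReal_mul, re_ofReal_mul, hre]
    gcongr
    linarith [mul_self_nonneg y]

/-- Integration of polynomials in `R + iy` against
`exp (τ * (σ² / 2) * z * (z - 1)) * p y`, where `z = R + iy`. -/
noncomputable def RapidDecay.gaussIntegral (hp : RapidDecay p) {τ : ℝ} (hτ : 0 ≤ τ) (σ R : ℝ) :
    ℂ[X] →ₗ[ℂ] ℂ :=
  (hp.exp_zLine_mul hτ σ R).polyIntegral R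

lemma RapidDecay.gaussIntegral_descPochhammer (hp : RapidDecay p) (hs : 0 < s) {τ : ℝ}
    (hτ : 0 ≤ τ) (σ R : ℝ) (n : ℕ) :
    (hp.cpowR_zLine_sub_one_mul s R).gaussIntegral hτ σ R (descPochhammer ℂ n) =
      (∫ y, (∏ k ∈ Finset.range n, (zLine R y - k)) * cpowR s (zLine R y) *
        exp ((σ ^ 2 : ℝ) / 2 * zLine R y * (zLine R y - 1) * τ) * p y) / s := by
  rw [eq_div_iff (ofReal_ne_zero.2 hs.ne'), mul_comm]
  change _ * ∫ y, _ = _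
  rw [← integral_const_mul]
  refine integral_congr_ae (.of_forall fun y => ?_)
  simp only [descPochhammer_eval_eq_prod_range, cpowR_eq_mul_cpowR_sub_one hs (zLine R y)]
  push_cast
  ring_nf

lemma integral_eval_mul_exp_etaLK_zero {μ c σ : ℝ} {K : Measure ℝ} (hσ₀ : σ ≠ 0)
    (hσ : c + ∫ x, x ^ 2 ∂K = σ ^ 2) (hp : RapidDecay p) {τ : ℝ} (hτ : 0 ≤ τ) (R : ℝ) {P : ℂ[X]}
    {g : ℂ → ℂ} (hg : ∀ z, P.eval z = g z) :
    ∫ y, g (zLine R y) * exp (τ * etaLK μ c K 0 (zLine R y)) * p y =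
      hp.gaussIntegral hτ σ R P := by
  simp only [etaLK_zero hσ₀ hσ, ← hg, mul_assoc]
  rfl

end Weight

lemma contDiff_comp_exp_mul_exp {f : ℝ → ℝ} (hf : ContDiffOn ℝ ∞ f (Ioi 0)) (R : ℝ) :
    ContDiff ℝ ∞ fun x => f (Real.exp x) * Real.exp (-R * x) :=
  (hf.comp_contDiff Real.contDiff_exp Real.exp_pos).mul (contDiff_const.mul contDiff_id).exp

section Expansion

variable {μ c : ℝ} {K : Measure ℝ} {R σ : ℝ} (hc : 0 ≤ c) (h0 : 0 ∈ expDomain K)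
  (h2 : 2 ∈ expDomain K) (hR : R ∈ expDomain K) (hR₁ : R + 1 ∈ expDomain K)
include hc h0 h2 hR hR₁

lemma hedgeIntegral_expansion {m s₃ s₄ : ℝ} (hσ₀ : σ ≠ 0) (hσ : c + ∫ x, x ^ 2 ∂K = σ ^ 2)
    (hm : μ + σ ^ 2 / 2 = m * σ ^ 2) (hs₃ : ∫ x, x ^ 3 ∂K = s₃ * σ ^ 3)
    (hs₄ : ∫ x, x ^ 4 ∂K = s₄ * σ ^ 4) {q : ℝ → ℂ} (hq : RapidDecay q) {τ : ℝ} (hτ : 0 ≤ τ)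
    {ξ : ℝ → ℂ} (hξ : ξ = fun u => ∫ y, gamLK μ c K u (zLine R y) *
      exp (τ * etaLK μ c K u (zLine R y)) * q y) :
    ContDiffOn ℝ 2 ξ (Icc 0 1) ∧ ξ 0 = hq.gaussIntegral hτ σ R (descPochhammer ℂ 1) ∧
      iteratedDerivWithin 1 ξ (Icc 0 1) 0 = hq.gaussIntegral hτ σ R (hedgePoly₁ σ m s₃ τ) ∧
      iteratedDerivWithin 2 ξ (Icc 0 1) 0 = hq.gaussIntegral hτ σ R (hedgePoly₂ σ m s₃ s₄ τ) := by
  have := isFiniteMeasure_sqMeasure h0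
  have h1 : 1 ∈ expDomain K := midpoint_mem_expDomain h0 h2 (by norm_num)
  have hpos : 0 < c + ∫ x, x ^ 2 ∂K := hσ ▸ sq_pos_of_ne_zero hσ₀
  have hjet (u : ℝ) (hu : u ∈ Icc (0 : ℝ) 1) := temperedJetAt_hedge (μ := μ) hc hpos
    (mul_one u ▸ mul_mem_expDomain hu h0 h1) (mul_mem_expDomain hu h0 h2)
    (mul_mem_expDomain hu h0 hR) (mul_mem_expDomain hu h0 hR₁) hτ
  obtain ⟨hcont, hone, htwo⟩ :=
    TemperedJetAt.contDiffOn_integral uniqueDiffOn_Icc_zero_one hjet hq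
  have hzero : (0 : ℝ) ∈ Icc (0 : ℝ) 1 := left_mem_Icc.2 zero_le_one
  have hgam (z : ℂ) : (descPochhammer ℂ 1).eval z = gamLK μ c K 0 z := by
    rw [descPochhammer_one, eval_X, gamLK_zero hσ₀ hσ]
  rw [hξ]
  exact ⟨hcont, integral_eval_mul_exp_etaLK_zero hσ₀ hσ hq hτ R hgam,
    (hone hzero).trans (integral_eval_mul_exp_etaLK_zero hσ₀ hσ hq hτ R
      (eval_hedgePoly₁ h0 hσ₀ hσ hs₃ hm τ)),
    (htwo hzero).trans (integral_eval_mul_exp_etaLK_zero hσ₀ hσ hq hτ R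
      (eval_hedgePoly₂ h0 hσ₀ hσ hs₃ hm hs₄ τ))⟩

end Expansion

theorem pure_hedge_ratio_expansion_general
    {μ c : ℝ} (hc : 0 ≤ c) {K : Measure ℝ} {R : ℝ}
    (h0 : 0 ∈ expDomain K) (h2 : 2 ∈ expDomain K)
    (hR : R ∈ expDomain K) (hR₁ : R + 1 ∈ expDomain K)
    {σ2 σ m s3 s4 : ℝ} (hσ2 : σ2 = c + ∫ x, x ^ 2 ∂K) (hσ2pos : 0 < σ2)
    (hσ : σ = √σ2) (hm : m = (μ + σ2 / 2) / σ2)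
    (hs3 : s3 = (∫ x, x ^ 3 ∂K) / σ ^ 3) (hs4 : s4 = (∫ x, x ^ 4 ∂K) / σ ^ 4)
    {p : ℝ → ℂ} (hp : RapidDecay p) {T t s : ℝ} (ht : t ≤ T) (hs : 0 < s)
    {ξ : ℝ → ℂ} (hξ : ∀ u, ξ u = ∫ y, cpowR s (zLine R y - 1) * gamLK μ c K u (zLine R y) *
      exp (etaLK μ c K u (zLine R y) * (T - t)) * p y)
    {D : ℕ → ℂ} (hD : ∀ n, D n = ∫ y, (∏ k ∈ Finset.range n, (zLine R y - k)) *
      cpowR s (zLine R y) * exp (σ2 / 2 * zLine R y * (zLine R y - 1) * (T - t)) * p y) :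
    ContDiffOn ℝ 2 ξ (Icc 0 1) ∧
    ξ 0 = D 1 / s ∧
    iteratedDerivWithin 1 ξ (Icc 0 1) 0 =
      s3 * σ * (1 / s) *
        (1 / 2 * D 2 +
          σ ^ 2 * (T - t) * ((1 - m) * D 2 + (1 - m / 2) * D 3 + 1 / 6 * D 4)) ∧
    iteratedDerivWithin 2 ξ (Icc 0 1) 0 =
      s3 ^ 2 * σ ^ 2 * (1 / s) *
        (-1 * D 2 +
          σ ^ 2 * (T - t) *
            ((2 / 3 + m) * D 2 + (17 / 6 - m) * D 3 + (3 / 2 - m / 2) * D 4 + 1 / 6 * D 5)) +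
      s3 ^ 2 * σ ^ 6 * (T - t) ^ 2 * (1 / s) *
        ((1 - 2 * m + m ^ 2) * D 2 + (7 - 10 * m + 7 / 2 * m ^ 2) * D 3 +
          (55 / 6 - 9 * m + 2 * m ^ 2) * D 4 + (23 / 6 - 7 / 3 * m + m ^ 2 / 4) * D 5 +
          (7 / 12 - m / 6) * D 6 + 1 / 36 * D 7) +
      s4 * σ ^ 2 * (1 / s) *
        ((3 / 2 * D 2 + 1 / 3 * D 3) +
          σ ^ 2 * (T - t) *
            ((7 / 6 - 3 * m) * D 2 + (25 / 12 - 5 / 2 * m) * D 3 + (5 / 6 - m / 3) * D 4 +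
              1 / 12 * D 5)) := by
  have hσ₀ : σ ≠ 0 := hσ ▸ (Real.sqrt_pos.2 hσ2pos).ne'
  obtain rfl : σ2 = σ ^ 2 := by rw [hσ, Real.sq_sqrt hσ2pos.le]
  have hm' := ((eq_div_iff hσ2pos.ne').1 hm).symm
  have hs3' := ((eq_div_iff (pow_ne_zero 3 hσ₀)).1 hs3).symm
  have hs4' := ((eq_div_iff (pow_ne_zero 4 hσ₀)).1 hs4).symm
  have hτ : 0 ≤ T - t := sub_nonneg.2 ht
  have hq := hp.cpowR_zLine_sub_one_mul s R
  have hξ' : ξ = fun u => ∫ y, gamLK μ c K u (zLine R y) *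
      exp ((T - t : ℝ) * etaLK μ c K u (zLine R y)) * (cpowR s (zLine R y - 1) * p y) := by
    funext u
    rw [hξ]
    congr! 2 with y
    push_cast
    ring_nf
  have hD' (n : ℕ) : hq.gaussIntegral hτ σ R (descPochhammer ℂ n) = D n / s := by
    rw [hD, hp.gaussIntegral_descPochhammer hs, ofReal_sub]
  obtain ⟨hcont, hzero, hone, htwo⟩ :=
    hedgeIntegral_expansion hc h0 h2 hR hR₁ hσ₀ hσ2.symm hm' hs3' hs4' hq hτ hξ'
  refine ⟨hcont, hzero.trans (hD' 1), hone.trans ?_, htwo.trans ?_⟩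
  · simp only [hedgePoly₁, map_add, map_smul, smul_eq_mul, hD', ofReal_sub]
    ring
  · simp only [hedgePoly₂, map_add, map_smul, smul_eq_mul, hD', ofReal_sub]
    ring

/-- second-order expansion of the pure hedge ratio `ξ(t,s)`
(Theorem `ApproxRatioPureHedge`). -/
theorem pure_hedge_ratio_expansion
    (μ c : ℝ) (hc : 0 ≤ c) (K : MeasureTheory.Measure ℝ)
    (hK0 : K {0} = 0)
    (hKmin : ∫⁻ x : ℝ, ENNReal.ofReal (min 1 (x ^ 2)) ∂K ≠ ⊤)
    (R : ℝ) (hR : R ≠ 0) (a b : ℝ)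
    (h0 : (0 : ℝ) ∈ Set.Ioo a b) (h2 : (2 : ℝ) ∈ Set.Ioo a b)
    (h2R : 2 * R ∈ Set.Ioo a b)
    (hK5 : ∫⁻ x in {x : ℝ | 1 ≤ |x|}, ENNReal.ofReal (|x| ^ 5) ∂K ≠ ⊤)
    (hKexp : ∀ s ∈ Set.Ioo a b,
      ∫⁻ x in {x : ℝ | 1 ≤ |x|}, ENNReal.ofReal (Real.exp (s * x)) ∂K ≠ ⊤)
    (σ2 : ℝ) (hσ2 : σ2 = c + ∫ x : ℝ, x ^ 2 ∂K) (hσ2pos : 0 < σ2)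
    (σ m s3 s4 : ℝ) (hσ : σ = Real.sqrt σ2) (hm : m = (μ + σ2 / 2) / σ2)
    (hs3 : s3 = (∫ x : ℝ, x ^ 3 ∂K) / σ ^ 3) (hs4 : s4 = (∫ x : ℝ, x ^ 4 ∂K) / σ ^ 4)
    (f : ℝ → ℝ) (hf : ContDiffOn ℝ (⊤ : ℕ∞) f (Set.Ioi 0))
    (l : ℝ → ℝ) (hl : l = fun x => f (Real.exp x) * Real.exp (-R * x))
    (hlint : ∀ n : ℕ, Integrable (iteratedDeriv n l))
    (T t s : ℝ) (hT : 0 < T) (ht : t ∈ Set.Ico 0 T) (hs : 0 < s)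
    (ξ : ℝ → ℂ)
    (hξ : ∀ lam : ℝ, ξ lam =
      ∫ y : ℝ, cpowR s (zLine R y - 1) * gamLK μ c K lam (zLine R y) *
        Complex.exp (etaLK μ c K lam (zLine R y) * ((T : ℂ) - (t : ℂ))) * pCoef l y)
    (D : ℕ → ℂ) (hD : ∀ k : ℕ, D k = cashGreek σ2 T R l k t s) :
    ContDiffOn ℝ 2 ξ (Set.Icc 0 1) ∧
    ξ 0 = D 1 / (s : ℂ) ∧
    iteratedDerivWithin 1 ξ (Set.Icc 0 1) 0 =
      (s3 : ℂ) * (σ : ℂ) * (1 / (s : ℂ)) *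
        ((1 / 2 : ℂ) * D 2 +
          (σ : ℂ) ^ 2 * ((T : ℂ) - (t : ℂ)) *
            ((1 - (m : ℂ)) * D 2 + (1 - (m : ℂ) / 2) * D 3 + (1 / 6 : ℂ) * D 4)) ∧
    iteratedDerivWithin 2 ξ (Set.Icc 0 1) 0 =
      (s3 : ℂ) ^ 2 * (σ : ℂ) ^ 2 * (1 / (s : ℂ)) *
        ((-1 : ℂ) * D 2 +
          (σ : ℂ) ^ 2 * ((T : ℂ) - (t : ℂ)) *
            ((2 / 3 + (m : ℂ)) * D 2 + (17 / 6 - (m : ℂ)) * D 3 +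
              (3 / 2 - (m : ℂ) / 2) * D 4 + (1 / 6 : ℂ) * D 5)) +
      (s3 : ℂ) ^ 2 * (σ : ℂ) ^ 6 * ((T : ℂ) - (t : ℂ)) ^ 2 * (1 / (s : ℂ)) *
        ((1 - 2 * (m : ℂ) + (m : ℂ) ^ 2) * D 2 +
          (7 - 10 * (m : ℂ) + 7 / 2 * (m : ℂ) ^ 2) * D 3 +
          (55 / 6 - 9 * (m : ℂ) + 2 * (m : ℂ) ^ 2) * D 4 +
          (23 / 6 - 7 / 3 * (m : ℂ) + (m : ℂ) ^ 2 / 4) * D 5 +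
          (7 / 12 - (m : ℂ) / 6) * D 6 + (1 / 36 : ℂ) * D 7) +
      (s4 : ℂ) * (σ : ℂ) ^ 2 * (1 / (s : ℂ)) *
        (((3 / 2 : ℂ) * D 2 + (1 / 3 : ℂ) * D 3) +
          (σ : ℂ) ^ 2 * ((T : ℂ) - (t : ℂ)) *
            ((7 / 6 - 3 * (m : ℂ)) * D 2 + (25 / 12 - 5 / 2 * (m : ℂ)) * D 3 +
              (5 / 6 - (m : ℂ) / 3) * D 4 + (1 / 12 : ℂ) * D 5)) := by
  have hdom := Ioo_subset_expDomain hKmin hKexp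
  have hR' : R ∈ expDomain K := midpoint_mem_expDomain (hdom h0) (hdom h2R) (by ring)
  have hR₁ : R + 1 ∈ expDomain K := midpoint_mem_expDomain (hdom h2R) (hdom h2) (by ring)
  have hp : RapidDecay (pCoef l) :=
    rapidDecay_pCoef (hl ▸ contDiff_comp_exp_mul_exp hf R) hlint
  exact pure_hedge_ratio_expansion_general hc (hdom h0) (hdom h2) hR' hR₁ hσ2 hσ2pos hσ hm hs3 hs4
    hp ht.2.le hs hξ hD
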